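/- arXiv:2312.11061 — 4 statements merged into one kernel-verified Lean document; each statement's English description precedes it below -/
import Mathlib

section
/- Consider the compartmental system (S) on the box 𝒳 = [0,c₁] × ⋯ × [0,cₙ] satisfying assumptions (A1)–(A7), with flow φ(t,ξ) denoting the unique solution with φ(0,ξ) = ξ ∈ 𝒳. Suppose there exist a constant aₙ > 0 and, for each i = 2,…,n, a nonincreasing function h_i : [0,c_i] → ℝ such that f_{0n}(t,xₙ) ≥ aₙ for all t ≥ 0 and xₙ ∈ [0,cₙ], and f_{i,i−1}(t,x_i) ≥ h_i(x_i) > 0 for all t ≥ 0 and x_i ∈ [0,c_i), i = 2,…,n. Then (S) is incrementally exponentially stable with respect to 𝒳: there exist λ > 0 and γ ≥ 1 such that |φ(t,ξ¹) − φ(t,ξ²)|₁ ≤ γ e^{−λ t} |ξ¹ − ξ²|₁ for all ξ¹, ξ² ∈ 𝒳 and all t ≥ 0. -/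
open Finset

/-- Regularity assumption (A1) for a scalar coefficient function
`h : [0,∞) × [0, ci] → ℝ`: continuity, nonnegativity and Lipschitz continuity
in the second argument uniformly in the first. -/
def A1fun (ci : ℝ) (h : ℝ → ℝ → ℝ) : Prop :=
  ContinuousOn (fun p : ℝ × ℝ => h p.1 p.2) (Set.Ici 0 ×ˢ Set.Icc 0 ci) ∧
  (∀ t ∈ Set.Ici (0 : ℝ), ∀ s ∈ Set.Icc 0 ci, 0 ≤ h t s) ∧
  ∃ L : ℝ, ∀ t ∈ Set.Ici (0 : ℝ), ∀ s₁ ∈ Set.Icc 0 ci, ∀ s₂ ∈ Set.Icc 0 ci,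
    |h t s₁ - h t s₂| ≤ L * |s₁ - s₂|

/-- The box `𝒳 = [0,c₁] × ⋯ × [0,cₙ]`. -/
def boxIcc {n : ℕ} (c : Fin n → ℝ) : Set (Fin n → ℝ) :=
  {x | ∀ i, x i ∈ Set.Icc 0 (c i)}

/-- Right-hand side of the compartmental system (S). -/
def Qrhs {n : ℕ} (f0 : Fin n → ℝ → ℝ → ℝ) (fc : Fin n → Fin n → ℝ → ℝ → ℝ)
    (g Ienv : Fin n → ℝ → ℝ → ℝ) (t : ℝ) (x : Fin n → ℝ) : Fin n → ℝ := fun i =>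
  (∑ j ∈ univ.erase i, fc i j t (x i) * g j t (x j)) + Ienv i t (x i)
    - (f0 i t (x i) + ∑ j ∈ univ.erase i, fc j i t (x j)) * g i t (x i)

/-- The `1`-norm `|x|₁ = ∑ i, |x i|` on `ℝⁿ`. -/
def onenorm {n : ℕ} (x : Fin n → ℝ) : ℝ := ∑ i, |x i|


lemma aux_gron (f f' : ℝ → ℝ) (a K : ℝ)
    (hd : ∀ t ≥ a, HasDerivWithinAt f (f' t) (Set.Ici t) t)
    (hcont : ContinuousOn f (Set.Ici a))
    (hb : ∀ t ≥ a, f' t ≤ K * f t) : ∀ t ≥ a, f t ≤ f a * Real.exp (K * (t - a)) := by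
  intro t ht
  have := le_gronwallBound_of_liminf_deriv_right_le (f := f) (f' := f') (δ := f a) (K := K)
    (ε := 0) (a := a) (b := t) (hcont.mono Set.Icc_subset_Ici_self)
    (fun x hx r hr => (hd x hx.1).liminf_right_slope_le hr) le_rfl
    (fun x hx => by simpa using hb x hx.1) t ⟨ht, le_rfl⟩
  simpa [gronwallBound_ε0] using this

lemma aux_abs (u : ℝ → ℝ) (v t : ℝ) (h : HasDerivAt u v t) :
    ∃ s : ℝ, |s| ≤ 1 ∧ s * u t = |u t| ∧
      HasDerivWithinAt (fun r => |u r|) (s * v) (Set.Ici t) t := by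
  rcases lt_trichotomy (u t) 0 with hu | hu | hu
  · refine ⟨-1, by simp, by rw [abs_of_neg hu]; ring, ?_⟩
    have h2 : HasDerivAt (fun r => |u r|) (-1 * v) t := (hasDerivAt_abs_neg hu).comp t h
    exact h2.hasDerivWithinAt
  · have h1 : HasDerivWithinAt (fun r => |u r|) |v| (Set.Ici t) t := by
      have h2 := h.hasDerivWithinAt (s := Set.Ici t)
      rw [hasDerivWithinAt_iff_tendsto_slope] at h2 ⊢
      refine h2.abs.congr' ?_
      filter_upwards [self_mem_nhdsWithin] with r hr
      have hr' : 0 ≤ r - t := sub_nonneg.2 hr.1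
      simp [slope_def_field, hu, abs_div, abs_of_nonneg hr']
    refine ⟨SignType.sign v, ?_, by simp [hu], ?_⟩
    · rcases lt_trichotomy v 0 with hv | hv | hv <;> simp [hv]
    · rw [sign_mul_self]; exact h1
  · refine ⟨1, by simp, by rw [abs_of_pos hu]; ring, ?_⟩
    have h2 : HasDerivAt (fun r => |u r|) (1 * v) t := (hasDerivAt_abs_pos hu).comp t h
    exact h2.hasDerivWithinAt

lemma aux_static (n : ℕ) (w d : Fin n → ℝ) (A B : Fin n → Fin n → ℝ) (s D e : Fin n → ℝ)
    (C κ η : ℝ) (hC : 0 ≤ C) (hη : 0 ≤ η) (hD : ∀ i, 0 ≤ D i) (hd : ∀ i, 0 ≤ d i)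
    (hw0 : ∀ i, 0 ≤ w i) (hs : ∀ i, |s i| ≤ 1)
    (hA : ∀ i j, |A i j| ≤ C * D j) (hAs : ∀ i j, s j * A i j = |A i j|)
    (hB : ∀ i j, |B i j| ≤ C * D i) (hBs : ∀ i j, s i * B i j = |B i j|)
    (hw : ∀ i j, i < j → 0 ≤ w i - w j ∧ w i - w j ≤ η * d j)
    (hch : ∀ i j : Fin n, (i : ℕ) = j + 1 → w j - w i = d j ∧ κ * D j ≤ |A i j|)
    (he : ∀ i, 0 ≤ e i) (hel : ∀ i : Fin n, (i : ℕ) + 1 = n → d i * (κ * D i) ≤ w i * e i) :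
    ∑ i, ∑ j, (w i * s i - w j * s j) * (A i j - B i j) - ∑ i, w i * e i
      ≤ (2 * C * η * n - κ) * ∑ k, d k * D k := by
  have key : ∀ i j, (w i * s i - w j * s j) * (A i j - B i j) ≤
      C * η * (d j * D j) + C * η * (d i * D i)
        - (if (i : ℕ) = j + 1 then κ * (d j * D j) else 0) := by
    intro i j
    have h1 : (w i * s i - w j * s j) * (A i j - B i j) ≤ (w i - w j) * (|A i j| - |B i j|) := by
      have a1 : s i * A i j ≤ |A i j| := by
        calc s i * A i j ≤ |s i * A i j| := le_abs_self _
          _ = |s i| * |A i j| := abs_mul _ _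
          _ ≤ 1 * |A i j| := by gcongr; exact hs i
          _ = _ := one_mul _
      have a2 : s j * B i j ≤ |B i j| := by
        calc s j * B i j ≤ |s j * B i j| := le_abs_self _
          _ = |s j| * |B i j| := abs_mul _ _
          _ ≤ 1 * |B i j| := by gcongr; exact hs j
          _ = _ := one_mul _
      have b1 := mul_le_mul_of_nonneg_left a1 (hw0 i)
      have b2 := mul_le_mul_of_nonneg_left a2 (hw0 j)
      have e1 : (w i * s i - w j * s j) * (A i j - B i j) =
        w i * (s i * A i j) - w j * (s j * A i j) - w i * (s i * B i j) + w j * (s j * B i j) := by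
          ring
      rw [e1, hAs, hBs]; nlinarith
    refine h1.trans ?_
    have pi : 0 ≤ C * η * (d i * D i) := by have := hd i; have := hD i; positivity
    have pj : 0 ≤ C * η * (d j * D j) := by have := hd j; have := hD j; positivity
    have nA := abs_nonneg (A i j)
    have nB := abs_nonneg (B i j)
    rcases lt_trichotomy i j with hij | hij | hij
    · obtain ⟨p, q⟩ := hw i j hij
      have : ¬ ((i : ℕ) = j + 1) := by have : (i : ℕ) < j := hij; omega
      rw [if_neg this]
      have : (w i - w j) * |A i j| ≤ (η * d j) * (C * D j) :=
        mul_le_mul q (hA i j) nA (by have := hd j; positivity)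
      have := mul_nonneg p nB
      nlinarith
    · subst hij
      have : ¬ ((i : ℕ) = i + 1) := by omega
      rw [if_neg this]; simp; linarith
    · obtain ⟨p, q⟩ := hw j i hij
      have h2 : (w j - w i) * |B i j| ≤ (η * d i) * (C * D i) :=
        mul_le_mul q (hB i j) nB (by have := hd i; positivity)
      split_ifs with hc
      · obtain ⟨r1, r2⟩ := hch i j hc
        have h3 := mul_le_mul_of_nonneg_left r2 p
        rw [r1] at h3 h2
        have : w i - w j = - d j := by linarith
        rw [this]
        nlinarith
      · have := mul_nonneg p nA
        nlinarith
  have hsum : ∑ i, ∑ j, (w i * s i - w j * s j) * (A i j - B i j) ≤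
      ∑ i : Fin n, ∑ j : Fin n, (C * η * (d j * D j) + C * η * (d i * D i)
        - (if (i : ℕ) = j + 1 then κ * (d j * D j) else 0)) :=
    Finset.sum_le_sum fun i _ => Finset.sum_le_sum fun j _ => key i j
  have h3 : ∑ i : Fin n, ∑ j : Fin n, (if (i : ℕ) = j + 1 then κ * (d j * D j) else 0)
      + ∑ i, w i * e i ≥ κ * ∑ k, d k * D k := by
    rw [Finset.sum_comm, ← Finset.sum_add_distrib, Finset.mul_sum]
    refine Finset.sum_le_sum fun j _ => ?_
    by_cases hj : (j : ℕ) + 1 < n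
    · have : ∑ i : Fin n, (if (i : ℕ) = j + 1 then κ * (d j * D j) else 0) = κ * (d j * D j) := by
        rw [Finset.sum_eq_single ⟨j + 1, hj⟩]
        · simp
        · intro b _ hb
          rw [if_neg]; intro h; exact hb (Fin.ext h)
        · simp
      rw [this]
      have := mul_nonneg (hw0 j) (he j)
      linarith
    · have h5 := hel j (by have := j.isLt; omega)
      have : ∑ i : Fin n, (if (i : ℕ) = j + 1 then κ * (d j * D j) else 0) = 0 := by
        refine Finset.sum_eq_zero fun i _ => ?_
        rw [if_neg]; have := i.isLt; omega
      rw [this]; linarith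
  have h4 : ∑ i : Fin n, ∑ j : Fin n, (C * η * (d j * D j) + C * η * (d i * D i)
        - (if (i : ℕ) = j + 1 then κ * (d j * D j) else 0)) =
      2 * C * η * n * ∑ k, d k * D k -
       ∑ i : Fin n, ∑ j : Fin n, (if (i : ℕ) = j + 1 then κ * (d j * D j) else 0) := by
    simp only [Finset.sum_sub_distrib, Finset.sum_add_distrib, ← Finset.mul_sum,
      Finset.sum_const, Finset.card_univ, Fintype.card_fin, nsmul_eq_mul]
    have e2 : ∑ x, d x * ((n : ℝ) * D x) = n * ∑ x, d x * D x := by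
      rw [Finset.mul_sum]; exact Finset.sum_congr rfl fun i _ => by ring
    congr 1
    rw [e2]
    ring
  linarith

lemma aux_weights (n : ℕ) (ε : ℝ) (h0 : 0 < ε) (h1 : ε ≤ 1) :
    ∃ w d : Fin n → ℝ, (∀ i, 1 ≤ w i) ∧ (∀ i, w i ≤ n) ∧ (∀ i, ε ^ n ≤ d i) ∧ (∀ i, d i ≤ 1) ∧
      (∀ i j, i < j → 0 ≤ w i - w j ∧ w i - w j ≤ (n * ε) * d j) ∧
      (∀ i j : Fin n, (i : ℕ) = j + 1 → w j - w i = d j) := by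
  have pw : ∀ k, ε ^ k ≤ 1 := fun k => pow_le_one₀ h0.le h1
  refine ⟨fun k => ∑ l ∈ Finset.range (n - k), ε ^ l, fun k => ε ^ (n - 1 - (k : ℕ)),
    ?_, ?_, ?_, ?_, ?_, ?_⟩
  · intro i
    have := Finset.single_le_sum (f := fun l => ε ^ l) (s := Finset.range (n - i))
      (fun l _ => by positivity) (Finset.mem_range.2 (show 0 < n - (i : ℕ) by omega))
    simpa using this
  · intro i
    calc ∑ l ∈ Finset.range (n - i), ε ^ l ≤ ∑ l ∈ Finset.range (n - i), (1 : ℝ) :=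
          Finset.sum_le_sum fun l _ => pw l
      _ = ((n - i : ℕ) : ℝ) := by simp
      _ ≤ n := by exact_mod_cast Nat.sub_le _ _
  · intro i
    exact pow_le_pow_of_le_one h0.le h1 (by omega)
  · intro i; exact pw _
  · intro i j hij
    have hij' : (i : ℕ) < j := hij
    have e1 : ∑ l ∈ Finset.range (n - i), ε ^ l - ∑ l ∈ Finset.range (n - j), ε ^ l
        = ∑ l ∈ Finset.Ico (n - j : ℕ) (n - i), ε ^ l := by
      rw [Finset.sum_Ico_eq_sub _ (by omega)]
    simp only [e1]
    refine ⟨Finset.sum_nonneg fun l _ => by positivity, ?_⟩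
    calc ∑ l ∈ Finset.Ico (n - j : ℕ) (n - i), ε ^ l
        ≤ ∑ l ∈ Finset.Ico (n - j : ℕ) (n - i), ε ^ (n - j : ℕ) :=
          Finset.sum_le_sum fun l hl =>
            pow_le_pow_of_le_one h0.le h1 (Finset.mem_Ico.1 hl).1
      _ = ((n - i - (n - j) : ℕ) : ℝ) * ε ^ (n - j : ℕ) := by simp
      _ ≤ n * ε ^ (n - j : ℕ) := by
          gcongr; omega
      _ = n * ε * ε ^ (n - 1 - (j : ℕ)) := by
          rw [show n - (j : ℕ) = (n - 1 - (j : ℕ)) + 1 by omega, pow_succ]; ring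
  · intro i j hij
    have := i.isLt
    simp only []
    rw [show n - (j : ℕ) = (n - i) + 1 by omega, Finset.sum_range_succ,
      show n - 1 - (j : ℕ) = n - i by omega]
    ring

lemma aux_Q {n : ℕ} (f0 : Fin n → ℝ → ℝ → ℝ) (fc : Fin n → Fin n → ℝ → ℝ → ℝ)
    (g Ienv : Fin n → ℝ → ℝ → ℝ) (t : ℝ) (x : Fin n → ℝ) (i : Fin n) :
    Qrhs f0 fc g Ienv t x i =
      (∑ j, if j = i then 0 else fc i j t (x i) * g j t (x j))
      - (∑ j, if i = j then 0 else fc j i t (x j) * g i t (x i))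
      + Ienv i t (x i) - f0 i t (x i) * g i t (x i) := by
  have e : ∀ F : Fin n → ℝ, ∑ j ∈ univ.erase i, F j = ∑ j, if j = i then 0 else F j := by
    intro F
    rw [← Finset.sum_erase (a := i) univ (by simp)]
    refine Finset.sum_congr rfl fun j hj => ?_
    rw [if_neg (Finset.ne_of_mem_erase hj)]
  unfold Qrhs
  rw [add_mul, Finset.sum_mul, e, e]
  simp only [eq_comm (a := i)]
  ring

/-- Output rate along the chain. -/
def auxOut {n : ℕ} (f0 : Fin n → ℝ → ℝ → ℝ) (fc : Fin n → Fin n → ℝ → ℝ → ℝ) (t : ℝ)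
    (x : Fin n → ℝ) (k : Fin n) : ℝ :=
  if hk : (k : ℕ) + 1 < n then fc ⟨k + 1, hk⟩ k t (x ⟨k + 1, hk⟩) else f0 k t (x k)

/-- Facts at one time. -/
structure AuxAt {n : ℕ} (c : Fin n → ℝ) (f0 : Fin n → ℝ → ℝ → ℝ) (fc : Fin n → Fin n → ℝ → ℝ → ℝ)
    (g Ienv : Fin n → ℝ → ℝ → ℝ) (L M t : ℝ) : Prop where
  L0 : 0 ≤ L
  M0 : 0 ≤ M
  f00 : ∀ i, ∀ s ∈ Set.Icc 0 (c i), 0 ≤ f0 i t s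
  fc0 : ∀ i j, j ≠ i → ∀ s ∈ Set.Icc 0 (c i), 0 ≤ fc i j t s
  fcM : ∀ i j, j ≠ i → ∀ s ∈ Set.Icc 0 (c i), fc i j t s ≤ M
  fcL : ∀ i j, j ≠ i → ∀ s ∈ Set.Icc 0 (c i), ∀ r ∈ Set.Icc 0 (c i),
    |fc i j t s - fc i j t r| ≤ L * |s - r|
  fcc : ∀ i j, j ≠ i → fc i j t (c i) = 0
  g0 : ∀ i, ∀ s ∈ Set.Icc 0 (c i), 0 ≤ g i t s
  gM : ∀ i, ∀ s ∈ Set.Icc 0 (c i), g i t s ≤ M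
  gL : ∀ i, ∀ s ∈ Set.Icc 0 (c i), ∀ r ∈ Set.Icc 0 (c i), |g i t s - g i t r| ≤ L * |s - r|
  gz : ∀ i, g i t 0 = 0
  gge : ∀ i, ∀ xi yi : ℝ, 0 ≤ xi → xi ≤ yi → yi ≤ c i → yi - xi ≤ g i t yi - g i t xi
  fcA : ∀ i j, j ≠ i → AntitoneOn (fc i j t) (Set.Icc 0 (c i))
  f0M : ∀ i, MonotoneOn (f0 i t) (Set.Icc 0 (c i))
  IA : ∀ i, AntitoneOn (Ienv i t) (Set.Icc 0 (c i))
  Iz : ∀ i, ∀ s ∈ Set.Icc 0 (c i), Ienv i t s = 0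

lemma aux_sgn {s a b u v : ℝ} (hs : s * (a - b) = |a - b|) (h1 : a ≤ b → u ≤ v)
    (h2 : b ≤ a → v ≤ u) : s * (u - v) = |u - v| := by
  rcases lt_trichotomy a b with h | h | h
  · have hs' : s = -1 := by
      have hab : a - b < 0 := by linarith
      rw [abs_of_neg hab] at hs
      have : (s + 1) * (a - b) = 0 := by linarith
      rcases mul_eq_zero.1 this with h | h <;> linarith
    rw [abs_of_nonpos (by linarith [h1 h.le]), hs']; ring
  · have : u = v := le_antisymm (h1 h.le) (h2 h.ge)
    simp [this]
  · have hs' : s = 1 := by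
      have hab : 0 < a - b := by linarith
      rw [abs_of_pos hab] at hs
      have : (s - 1) * (a - b) = 0 := by linarith
      rcases mul_eq_zero.1 this with h | h <;> linarith
    rw [abs_of_nonneg (by linarith [h2 h.le]), hs']; ring

lemma aux_gabs {n : ℕ} {c : Fin n → ℝ} {f0 : Fin n → ℝ → ℝ → ℝ} {fc : Fin n → Fin n → ℝ → ℝ → ℝ}
    {g Ienv : Fin n → ℝ → ℝ → ℝ} {L M t : ℝ} (H : AuxAt c f0 fc g Ienv L M t) (i : Fin n)
    {a b : ℝ} (ha : a ∈ Set.Icc 0 (c i)) (hb : b ∈ Set.Icc 0 (c i)) :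
    |a - b| ≤ |g i t a - g i t b| := by
  rcases le_total a b with h | h
  · have := H.gge i a b ha.1 h hb.2
    rw [abs_of_nonpos (by linarith), abs_of_nonpos (by linarith)]; linarith
  · have := H.gge i b a hb.1 h ha.2
    rw [abs_of_nonneg (by linarith), abs_of_nonneg (by linarith)]; linarith

lemma aux_field {n : ℕ} {c : Fin n → ℝ} {f0 : Fin n → ℝ → ℝ → ℝ}
    {fc : Fin n → Fin n → ℝ → ℝ → ℝ}
    {g Ienv : Fin n → ℝ → ℝ → ℝ} {L M t : ℝ} (H : AuxAt c f0 fc g Ienv L M t)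
    (w d : Fin n → ℝ) (κ η : ℝ) (hη : 0 ≤ η) (hκ : 0 ≤ κ) (hd : ∀ i, 0 ≤ d i)
    (hd1 : ∀ i, d i ≤ 1) (hw1 : ∀ i, 1 ≤ w i)
    (hw : ∀ i j, i < j → 0 ≤ w i - w j ∧ w i - w j ≤ η * d j)
    (hch : ∀ i j : Fin n, (i : ℕ) = j + 1 → w j - w i = d j)
    (x y s : Fin n → ℝ) (hx : x ∈ boxIcc c) (hy : y ∈ boxIcc c)
    (hs : ∀ i, |s i| ≤ 1) (hsx : ∀ i, s i * (x i - y i) = |x i - y i|)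
    (hout : ∀ k, κ ≤ auxOut f0 fc t x k) :
    ∑ i, w i * (s i * (Qrhs f0 fc g Ienv t x i - Qrhs f0 fc g Ienv t y i)) ≤
      (2 * (L * M) * η * n - κ) * ∑ k, d k * |x k - y k| := by
  have gmono : ∀ i, ∀ a ∈ Set.Icc 0 (c i), ∀ b ∈ Set.Icc 0 (c i), a ≤ b → g i t a ≤ g i t b := by
    intro i a ha b hb hab
    linarith [H.gge i a b ha.1 hab hb.2]
  let A : Fin n → Fin n → ℝ := fun i j =>
    if j = i then 0 else fc i j t (x i) * (g j t (x j) - g j t (y j))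
  let B : Fin n → Fin n → ℝ := fun i j =>
    if j = i then 0 else (fc i j t (y i) - fc i j t (x i)) * g j t (y j)
  let e : Fin n → ℝ := fun i =>
    s i * (f0 i t (x i) * g i t (x i) - f0 i t (y i) * g i t (y i))
  have hgs : ∀ j, s j * (g j t (x j) - g j t (y j)) = |g j t (x j) - g j t (y j)| := fun j =>
    aux_sgn (hsx j) (gmono j _ (hx j) _ (hy j)) (gmono j _ (hy j) _ (hx j))
  have hfm : ∀ j, s j * (f0 j t (x j) - f0 j t (y j)) = |f0 j t (x j) - f0 j t (y j)| := fun j =>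
    aux_sgn (hsx j) (fun h => H.f0M j (hx j) (hy j) h) (fun h => H.f0M j (hy j) (hx j) h)
  have hee : ∀ i, f0 i t (x i) * |x i - y i| ≤ e i := by
    intro i
    have e1 : e i = f0 i t (x i) * (s i * (g i t (x i) - g i t (y i)))
        + (s i * (f0 i t (x i) - f0 i t (y i))) * g i t (y i) := by
      simp only [e]; ring
    rw [e1, hgs, hfm]
    have := mul_nonneg (abs_nonneg (f0 i t (x i) - f0 i t (y i))) (H.g0 i _ (hy i))
    have := mul_le_mul_of_nonneg_left (aux_gabs H i (hx i) (hy i)) (H.f00 i _ (hx i))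
    linarith
  have main := aux_static n w d A B s (fun i => |x i - y i|) e (L * M) κ η
    (mul_nonneg H.L0 H.M0) hη (fun i => abs_nonneg _) hd (fun i => by linarith [hw1 i]) hs
    ?_ ?_ ?_ ?_ hw ?_ ?_ ?_
  · refine le_trans (le_of_eq ?_) main
    have q : ∀ i, Qrhs f0 fc g Ienv t x i - Qrhs f0 fc g Ienv t y i =
        ∑ j, (A i j - B i j) - ∑ j, (A j i - B j i)
        - (f0 i t (x i) * g i t (x i) - f0 i t (y i) * g i t (y i)) := by
      intro i
      have e1 : ∀ i j, A i j - B i j = (if j = i then 0 else fc i j t (x i) * g j t (x j)) -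
          (if j = i then 0 else fc i j t (y i) * g j t (y j)) := by
        intro i j
        simp only [A, B]
        split_ifs <;> ring
      simp only [e1, Finset.sum_sub_distrib]
      rw [aux_Q, aux_Q, H.Iz i _ (hx i), H.Iz i _ (hy i)]
      ring
    have : ∀ i, w i * (s i * (Qrhs f0 fc g Ienv t x i - Qrhs f0 fc g Ienv t y i)) =
        ∑ j, w i * s i * (A i j - B i j) - ∑ j, w i * s i * (A j i - B j i) - w i * e i := by
      intro i
      rw [q i, ← Finset.mul_sum, ← Finset.mul_sum]; simp only [e]; ring
    simp only [this, Finset.sum_sub_distrib, sub_mul]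
    rw [Finset.sum_comm (f := fun i j => w i * s i * (A j i - B j i))]
  · intro i j
    simp only [A]
    split_ifs with hij
    · simpa using mul_nonneg (mul_nonneg H.L0 H.M0) (abs_nonneg _)
    · rw [abs_mul, abs_of_nonneg (H.fc0 i j hij _ (hx i)), mul_comm L M, mul_assoc]
      exact mul_le_mul (H.fcM i j hij _ (hx i)) (H.gL j _ (hx j) _ (hy j)) (abs_nonneg _) H.M0
  · intro i j
    simp only [A]
    split_ifs with hij
    · simp
    · rw [abs_mul, abs_of_nonneg (H.fc0 i j hij _ (hx i)), ← hgs]; ring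
  · intro i j
    simp only [B]
    split_ifs with hij
    · simpa using mul_nonneg (mul_nonneg H.L0 H.M0) (abs_nonneg _)
    · rw [abs_mul, abs_of_nonneg (H.g0 j _ (hy j)), mul_right_comm]
      refine mul_le_mul ?_ (H.gM j _ (hy j)) (H.g0 j _ (hy j))
        (mul_nonneg H.L0 (abs_nonneg _))
      rw [abs_sub_comm]
      exact H.fcL i j hij _ (hx i) _ (hy i)
  · intro i j
    simp only [B]
    split_ifs with hij
    · simp
    · rw [abs_mul, abs_of_nonneg (H.g0 j _ (hy j)), ← mul_assoc]
      congr 1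
      exact aux_sgn (hsx i) (fun h => H.fcA i j hij (hx i) (hy i) h)
        (fun h => H.fcA i j hij (hy i) (hx i) h) |>.trans rfl
  · intro i j hij
    refine ⟨hch i j hij, ?_⟩
    have hne : j ≠ i := by rintro rfl; omega
    have hlt : (j : ℕ) + 1 < n := by have := i.isLt; omega
    have := hout j
    have hi : (⟨(j : ℕ) + 1, hlt⟩ : Fin n) = i := Fin.ext hij.symm
    rw [auxOut, dif_pos hlt, hi] at this
    simp only [A, if_neg hne]
    rw [abs_mul, abs_of_nonneg (H.fc0 i j hne _ (hx i))]
    exact mul_le_mul this (aux_gabs H j (hx j) (hy j)) (abs_nonneg _) (H.fc0 i j hne _ (hx i))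
  · intro i
    exact (mul_nonneg (H.f00 i _ (hx i)) (abs_nonneg _)).trans (hee i)
  · intro i hi
    have := hout i
    rw [auxOut, dif_neg (by omega)] at this
    have h1 : κ * |x i - y i| ≤ e i := (mul_le_mul_of_nonneg_right this (abs_nonneg _)).trans (hee i)
    exact mul_le_mul ((hd1 i).trans (hw1 i)) h1 (mul_nonneg hκ (abs_nonneg _))
      (by linarith [hw1 i])

lemma aux_rate {n : ℕ} {c : Fin n → ℝ} {f0 : Fin n → ℝ → ℝ → ℝ}
    {fc : Fin n → Fin n → ℝ → ℝ → ℝ}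
    {g Ienv : Fin n → ℝ → ℝ → ℝ} {L M t : ℝ} (H : AuxAt c f0 fc g Ienv L M t)
    (x : Fin n → ℝ) (hx : x ∈ boxIcc c) (k : Fin n) (a : ℝ) (ha : 0 ≤ a)
    (hout : a ≤ auxOut f0 fc t x k) :
    Qrhs f0 fc g Ienv t x k ≤ n * (L * M) * (c k - x k) - a * x k := by
  rw [aux_Q, H.Iz k _ (hx k)]
  have hck : (0 : ℝ) ≤ c k := (hx k).1.trans (hx k).2
  have gk : x k ≤ g k t (x k) := by
    have := H.gge k 0 (x k) le_rfl (hx k).1 (hx k).2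
    rw [H.gz] at this; linarith
  have h1 : (∑ j, if j = k then 0 else fc k j t (x k) * g j t (x j)) ≤
      n * (L * M) * (c k - x k) := by
    have hz : 0 ≤ c k - x k := sub_nonneg.2 (hx k).2
    calc (∑ j, if j = k then 0 else fc k j t (x k) * g j t (x j))
        ≤ ∑ j : Fin n, (L * M) * (c k - x k) := by
          refine Finset.sum_le_sum fun j _ => ?_
          split_ifs with hj
          · exact mul_nonneg (mul_nonneg H.L0 H.M0) hz
          · have h2 := H.fcL k j hj _ (hx k) _ ⟨hck, le_rfl⟩
            rw [H.fcc k j hj, sub_zero, abs_of_nonneg (H.fc0 k j hj _ (hx k)),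
              abs_sub_comm, abs_of_nonneg hz] at h2
            rw [mul_right_comm]
            exact mul_le_mul h2 (H.gM j _ (hx j)) (H.g0 j _ (hx j)) (mul_nonneg H.L0 hz)
      _ = _ := by simp; ring
  have nn : ∀ j ∈ (univ : Finset (Fin n)),
      0 ≤ (if k = j then 0 else fc j k t (x j) * g k t (x k)) := by
    intro j _
    split_ifs with hj
    · exact le_rfl
    · exact mul_nonneg (H.fc0 j k hj _ (hx j)) (H.g0 k _ (hx k))
  have h2 : a * x k ≤ (∑ j, if k = j then 0 else fc j k t (x j) * g k t (x k))
      + f0 k t (x k) * g k t (x k) := by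
    have hf := mul_nonneg (H.f00 k _ (hx k)) (H.g0 k _ (hx k))
    by_cases hk : (k : ℕ) + 1 < n
    · rw [auxOut, dif_pos hk] at hout
      have h3 := Finset.single_le_sum nn (Finset.mem_univ (⟨k + 1, hk⟩ : Fin n))
      have hne : k ≠ (⟨k + 1, hk⟩ : Fin n) := by
        intro h; have := congrArg Fin.val h; simp at this
      rw [if_neg hne] at h3
      have h4 := mul_le_mul hout gk (hx k).1 (ha.trans hout)
      linarith
    · rw [auxOut, dif_neg hk] at hout
      have h3 := Finset.sum_nonneg nn
      have h4 := mul_le_mul hout gk (hx k).1 (ha.trans hout)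
      linarith
  linarith

lemma aux_upper {n : ℕ} {c : Fin n → ℝ} (hc : ∀ i, 0 < c i) {f0 : Fin n → ℝ → ℝ → ℝ}
    {fc : Fin n → Fin n → ℝ → ℝ → ℝ}
    {g Ienv : Fin n → ℝ → ℝ → ℝ} {L M : ℝ} (H : ∀ t ≥ (0 : ℝ), AuxAt c f0 fc g Ienv L M t)
    (k : Fin n) (a T : ℝ) (ha : 0 < a) (hT : 0 ≤ T) :
    ∃ u, 0 ≤ u ∧ u < c k ∧ ∀ q : ℝ → Fin n → ℝ, (∀ t ≥ (0 : ℝ), q t ∈ boxIcc c ∧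
      HasDerivAt q (Qrhs f0 fc g Ienv t (q t)) t) → (∀ t ≥ T, a ≤ auxOut f0 fc t (q t) k) →
      ∀ t ≥ T + 1, q t k ≤ u := by
  have hLM : 0 ≤ L * M := mul_nonneg (H 0 le_rfl).L0 (H 0 le_rfl).M0
  set b := a + n * (L * M) with hb
  have hb0 : 0 < b := by positivity
  have hck := hc k
  have hab : a / b ≤ 1 := by
    rw [div_le_one hb0, hb]
    have : 0 ≤ n * (L * M) := by positivity
    linarith
  have hab0 : 0 < a / b := by positivity
  have hE0 := Real.exp_pos (-b)
  have hE1 : Real.exp (-b) < 1 := by rw [Real.exp_lt_one_iff]; linarith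
  have hp : 0 < a / b * (1 - Real.exp (-b)) := mul_pos hab0 (by linarith)
  have hp1 : a / b * (1 - Real.exp (-b)) ≤ 1 := mul_le_one₀ hab (by linarith) (by linarith)
  refine ⟨c k - (a / b * (1 - Real.exp (-b))) * c k, by nlinarith, by nlinarith, ?_⟩
  intro q hq hout t ht
  have hd : ∀ t ≥ T, HasDerivAt (fun r => q r k - c k + a / b * c k)
      (Qrhs f0 fc g Ienv t (q t) k) t := by
    intro t ht
    have := (hasDerivAt_pi.1 (hq t (hT.trans ht)).2) k
    exact (this.sub_const _).add_const _
  have := aux_gron (fun r => q r k - c k + a / b * c k)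
    (fun t => Qrhs f0 fc g Ienv t (q t) k) T (-b)
    (fun t ht => (hd t ht).hasDerivWithinAt)
    (fun t ht => (hd t ht).continuousAt.continuousWithinAt) ?_ t (by linarith)
  · have hqT := (hq T hT).1 k
    have h5 : (q T k - c k + a / b * c k) * Real.exp (-b * (t - T)) ≤
        (a / b * c k) * Real.exp (-b) := by
      refine mul_le_mul (by linarith [hqT.2]) ?_ (Real.exp_pos _).le (by positivity)
      rw [Real.exp_le_exp]; nlinarith
    have this' : q t k - c k + a / b * c k ≤
        (q T k - c k + a / b * c k) * Real.exp (-b * (t - T)) := this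
    linarith
  · intro t ht
    have h6 := aux_rate (H t (hT.trans ht)) (q t) (hq t (hT.trans ht)).1 k a ha.le (hout t ht)
    refine h6.trans (le_of_eq ?_)
    have : b * (a / b) = a := by field_simp
    have e3 : -b * (q t k - c k + a / b * c k) = -b * (q t k - c k) - (b * (a / b)) * c k := by ring
    simp only [e3]
    rw [this, hb]; ring

lemma aux_ev {n : ℕ} {c : Fin n → ℝ} (hc : ∀ i, 0 < c i) {f0 : Fin n → ℝ → ℝ → ℝ}
    {fc : Fin n → Fin n → ℝ → ℝ → ℝ}
    {g Ienv : Fin n → ℝ → ℝ → ℝ} {L M : ℝ} (H : ∀ t ≥ (0 : ℝ), AuxAt c f0 fc g Ienv L M t)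
    (an : ℝ) (han : 0 < an)
    (k0 : Fin n) (hk0 : (k0 : ℕ) + 1 = n)
    (hf0n : ∀ t ≥ (0 : ℝ), ∀ s ∈ Set.Icc 0 (c k0), an ≤ f0 k0 t s)
    (h : Fin n → ℝ → ℝ)
    (hhmono : ∀ i : Fin n, 1 ≤ (i : ℕ) → AntitoneOn (h i) (Set.Icc 0 (c i)))
    (hfii : ∀ i : Fin n, 1 ≤ (i : ℕ) → ∀ t ≥ (0 : ℝ), ∀ s ∈ Set.Ico 0 (c i),
      h i s ≤ fc i ⟨(i : ℕ) - 1, Nat.lt_of_le_of_lt (Nat.sub_le _ _) i.isLt⟩ t s ∧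
      0 < h i s) (m : ℕ) :
    ∃ κ T : ℝ, 0 < κ ∧ 0 ≤ T ∧ ∀ q : ℝ → Fin n → ℝ, (∀ t ≥ (0 : ℝ), q t ∈ boxIcc c ∧
      HasDerivAt q (Qrhs f0 fc g Ienv t (q t)) t) → ∀ t ≥ T, ∀ k : Fin n, n ≤ k + 1 + m →
      κ ≤ auxOut f0 fc t (q t) k := by
  induction m with
  | zero =>
    refine ⟨an, 0, han, le_rfl, ?_⟩
    intro q hq t ht k hk
    rw [auxOut, dif_neg (by omega)]
    have : k = k0 := Fin.ext (by have := k.isLt; omega)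
    rw [this]
    exact hf0n t ht _ ((hq t ht).1 _)
  | succ m ih =>
    obtain ⟨κ, T, hκ, hT, ih⟩ := ih
    by_cases hm : m + 1 < n
    · let k : Fin n := ⟨n - 1 - m, by omega⟩
      obtain ⟨u, hu0, hu1, hu⟩ := aux_upper hc H k κ T hκ hT
      have hk1 : 1 ≤ (k : ℕ) := by simp only [k]; omega
      have hpos := (hfii k hk1 0 le_rfl u ⟨hu0, hu1⟩).2
      refine ⟨min κ (h k u), T + 1, lt_min hκ hpos, by linarith, ?_⟩
      intro q hq t ht j hj
      have ht0 : (0 : ℝ) ≤ t := by linarith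
      by_cases hj' : n ≤ j + 1 + m
      · exact (min_le_left _ _).trans (ih q hq t (by linarith) j hj')
      · refine (min_le_right _ _).trans ?_
        have hjk : (j : ℕ) + 1 = k := by simp only [k]; omega
        have hlt : (j : ℕ) + 1 < n := by omega
        have e1 : (⟨j + 1, hlt⟩ : Fin n) = k := Fin.ext hjk
        rw [auxOut, dif_pos hlt, e1]
        have e2 : (⟨(k : ℕ) - 1, Nat.lt_of_le_of_lt (Nat.sub_le _ _) k.isLt⟩ : Fin n) = j :=
          Fin.ext (by simp only []; omega)
        have hqu := hu q hq (fun t ht => ih q hq t ht k (by simp only [k]; omega)) t ht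
        have hqk := (hq t ht0).1 k
        have h1 := (hfii k hk1 t ht0 (q t k) ⟨hqk.1, hqu.trans_lt hu1⟩).1
        rw [e2] at h1
        exact (hhmono k hk1 hqk ⟨hu0, hu1.le⟩ hqu).trans h1
    · refine ⟨κ, T, hκ, hT, ?_⟩
      intro q hq t ht j hj
      exact ih q hq t ht j (by omega)

lemma aux_V {n : ℕ} {c : Fin n → ℝ} {f0 : Fin n → ℝ → ℝ → ℝ}
    {fc : Fin n → Fin n → ℝ → ℝ → ℝ}
    {g Ienv : Fin n → ℝ → ℝ → ℝ} {L M : ℝ} (H : ∀ t ≥ (0 : ℝ), AuxAt c f0 fc g Ienv L M t)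
    (w d : Fin n → ℝ) (κ η : ℝ) (hη : 0 ≤ η) (hκ : 0 ≤ κ) (hd : ∀ i, 0 ≤ d i)
    (hd1 : ∀ i, d i ≤ 1) (hw1 : ∀ i, 1 ≤ w i)
    (hw : ∀ i j, i < j → 0 ≤ w i - w j ∧ w i - w j ≤ η * d j)
    (hch : ∀ i j : Fin n, (i : ℕ) = j + 1 → w j - w i = d j)
    (x y : ℝ → Fin n → ℝ)
    (hx : ∀ t ≥ (0 : ℝ), x t ∈ boxIcc c ∧ HasDerivAt x (Qrhs f0 fc g Ienv t (x t)) t)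
    (hy : ∀ t ≥ (0 : ℝ), y t ∈ boxIcc c ∧ HasDerivAt y (Qrhs f0 fc g Ienv t (y t)) t)
    (T : ℝ) (hT : 0 ≤ T) (hout : ∀ t ≥ T, ∀ k, κ ≤ auxOut f0 fc t (x t) k)
    (K : ℝ) (hK : ∀ i, (2 * (L * M) * η * n - κ) * d i ≤ K * w i) :
    ∀ t ≥ T, ∑ i, w i * |x t i - y t i| ≤
      (∑ i, w i * |x T i - y T i|) * Real.exp (K * (t - T)) := by
  have hdi : ∀ t : ℝ, ∀ i, ∃ s : ℝ, T ≤ t → |s| ≤ 1 ∧ s * (x t i - y t i) = |x t i - y t i| ∧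
      HasDerivWithinAt (fun r => |x r i - y r i|)
        (s * (Qrhs f0 fc g Ienv t (x t) i - Qrhs f0 fc g Ienv t (y t) i)) (Set.Ici t) t := by
    intro t i
    by_cases ht : T ≤ t
    · have h1 := hasDerivAt_pi.1 (hx t (hT.trans ht)).2 i
      have h2 := hasDerivAt_pi.1 (hy t (hT.trans ht)).2 i
      obtain ⟨s, hs⟩ := aux_abs (fun r => x r i - y r i) _ t (h1.sub h2)
      exact ⟨s, fun _ => hs⟩
    · exact ⟨0, fun h => absurd h ht⟩
  choose s hs using hdi
  refine aux_gron (fun t => ∑ i, w i * |x t i - y t i|)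
    (fun t => ∑ i, w i * (s t i *
      (Qrhs f0 fc g Ienv t (x t) i - Qrhs f0 fc g Ienv t (y t) i))) T K ?_ ?_ ?_
  · intro t ht
    exact HasDerivWithinAt.fun_sum fun i _ => ((hs t i ht).2.2).const_mul (w i)
  · refine continuousOn_finsetSum _ fun i _ => ?_
    intro t ht
    have h1 := (hasDerivAt_pi.1 (hx t (hT.trans ht)).2 i).continuousAt
    have h2 := (hasDerivAt_pi.1 (hy t (hT.trans ht)).2 i).continuousAt
    exact ((h1.sub h2).abs.const_mul (w i)).continuousWithinAt
  · intro t ht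
    have ht0 := hT.trans ht
    refine (aux_field (H t ht0) w d κ η hη hκ hd hd1 hw1 hw hch (x t) (y t) (s t)
      (hx t ht0).1 (hy t ht0).1 (fun i => (hs t i ht).1) (fun i => (hs t i ht).2.1)
      (hout t ht)).trans ?_
    rw [Finset.mul_sum, Finset.mul_sum]
    refine Finset.sum_le_sum fun i _ => ?_
    have := mul_le_mul_of_nonneg_right (hK i) (abs_nonneg (x t i - y t i))
    linarith

/-- under (A1)–(A7), if `f_{0n}(t,·) ≥ aₙ > 0` on `[0,cₙ]` and
for each `i = 2,…,n` (`0`-based: `1 ≤ i`) there is a nonincreasing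
`h_i : [0,c_i] → ℝ` with `f_{i,i−1}(t,x_i) ≥ h_i(x_i) > 0` on `[0,c_i)`, then
the system (S) is incrementally exponentially stable with respect to `𝒳`. -/
theorem stmt16 (n : ℕ) (hn : 0 < n) (c : Fin n → ℝ) (hc : ∀ i, 0 < c i)
    (f0 : Fin n → ℝ → ℝ → ℝ) (fc : Fin n → Fin n → ℝ → ℝ → ℝ)
    (g Ienv : Fin n → ℝ → ℝ → ℝ)
    (hA1 : (∀ i, A1fun (c i) (f0 i)) ∧ (∀ i, A1fun (c i) (g i)) ∧
      (∀ i, A1fun (c i) (Ienv i)) ∧ ∀ i j, j ≠ i → A1fun (c i) (fc i j))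
    (hA2 : ∀ t ≥ (0 : ℝ), ∀ i, Ienv i t 0 = 0 ∧ Ienv i t (c i) = 0 ∧
      g i t 0 = 0 ∧ ∀ j, j ≠ i → fc i j t (c i) = 0)
    (hA3 : ∀ t ≥ (0 : ℝ), ∀ i, ∀ xi yi : ℝ, 0 ≤ xi → xi ≤ yi → yi ≤ c i →
      yi - xi ≤ g i t yi - g i t xi)
    (hA4 : ∀ t ≥ (0 : ℝ), ∀ i j, j ≠ i → AntitoneOn (fc i j t) (Set.Icc 0 (c i)))
    (hA5 : ∀ t ≥ (0 : ℝ), ∀ i, MonotoneOn (f0 i t) (Set.Icc 0 (c i)))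
    (hA6 : ∀ t ≥ (0 : ℝ), ∀ i, AntitoneOn (Ienv i t) (Set.Icc 0 (c i)))
    -- (A7): existence and uniqueness of solutions in `𝒳` from any initial data
    (hA7 : ∀ τ ≥ (0 : ℝ), ∀ ξ ∈ boxIcc c, ∃ q : ℝ → Fin n → ℝ,
      (q τ = ξ ∧ ∀ t ≥ τ, q t ∈ boxIcc c ∧
        HasDerivAt q (Qrhs f0 fc g Ienv t (q t)) t) ∧
      ∀ q' : ℝ → Fin n → ℝ,
        (q' τ = ξ ∧ ∀ t ≥ τ, q' t ∈ boxIcc c ∧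
          HasDerivAt q' (Qrhs f0 fc g Ienv t (q' t)) t) →
        ∀ t ≥ τ, q' t = q t)
    -- the flow from time `0`
    (φ : ℝ → (Fin n → ℝ) → (Fin n → ℝ))
    (hφ : ∀ ξ ∈ boxIcc c, φ 0 ξ = ξ ∧ ∀ t ≥ (0 : ℝ), φ t ξ ∈ boxIcc c ∧
      HasDerivAt (fun s => φ s ξ) (Qrhs f0 fc g Ienv t (φ t ξ)) t)
    -- the extra assumptions of Proposition `IES2`
    (an : ℝ) (han : 0 < an)
    (hf0n : ∀ t ≥ (0 : ℝ), ∀ s ∈ Set.Icc 0 (c ⟨n - 1, by omega⟩),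
      an ≤ f0 ⟨n - 1, by omega⟩ t s)
    (h : Fin n → ℝ → ℝ)
    (hhmono : ∀ i : Fin n, 1 ≤ (i : ℕ) → AntitoneOn (h i) (Set.Icc 0 (c i)))
    (hfii : ∀ i : Fin n, 1 ≤ (i : ℕ) → ∀ t ≥ (0 : ℝ), ∀ s ∈ Set.Ico 0 (c i),
      h i s ≤ fc i ⟨(i : ℕ) - 1, Nat.lt_of_le_of_lt (Nat.sub_le _ _) i.isLt⟩ t s ∧
      0 < h i s) :
    ∃ lam : ℝ, 0 < lam ∧ ∃ γ : ℝ, 1 ≤ γ ∧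
      ∀ ξ₁ ∈ boxIcc c, ∀ ξ₂ ∈ boxIcc c, ∀ t ≥ (0 : ℝ),
        onenorm (φ t ξ₁ - φ t ξ₂) ≤ γ * Real.exp (-lam * t) * onenorm (ξ₁ - ξ₂) := by
  obtain ⟨hf, hg, hI, hfc⟩ := hA1
  have hLf : ∀ i j, ∃ L : ℝ, j ≠ i → ∀ t ∈ Set.Ici (0 : ℝ), ∀ s₁ ∈ Set.Icc 0 (c i),
      ∀ s₂ ∈ Set.Icc 0 (c i), |fc i j t s₁ - fc i j t s₂| ≤ L * |s₁ - s₂| := by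
    intro i j
    by_cases hij : j ≠ i
    · obtain ⟨L, hL⟩ := (hfc i j hij).2.2
      exact ⟨L, fun _ => hL⟩
    · exact ⟨0, fun h => absurd h hij⟩
  choose Lf hLf using hLf
  choose Lg hLg using fun i => (hg i).2.2
  obtain ⟨L, hL⟩ : ∃ L, L = ∑ i, |Lg i| + ∑ i, ∑ j, |Lf i j| := ⟨_, rfl⟩
  obtain ⟨M, hM⟩ : ∃ M, M = L * ∑ i, c i := ⟨_, rfl⟩
  have hL0 : 0 ≤ L := by rw [hL]; positivity
  have hcs : ∀ i, c i ≤ ∑ i, c i := fun i =>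
    Finset.single_le_sum (fun j _ => (hc j).le) (Finset.mem_univ i)
  have hM0 : 0 ≤ M := by
    rw [hM]; exact mul_nonneg hL0 (Finset.sum_nonneg fun j _ => (hc j).le)
  have hLg' : ∀ i, Lg i ≤ L := by
    intro i
    have h1 := Finset.single_le_sum (f := fun i => |Lg i|) (fun j _ => abs_nonneg _)
      (Finset.mem_univ i)
    have h2 : 0 ≤ ∑ i, ∑ j, |Lf i j| := by positivity
    have h3 := le_abs_self (Lg i)
    linarith
  have hLf' : ∀ i j, Lf i j ≤ L := by
    intro i j
    have h1 := Finset.single_le_sum (f := fun i => ∑ j, |Lf i j|)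
      (fun j _ => Finset.sum_nonneg fun k _ => abs_nonneg _) (Finset.mem_univ i)
    have h4 := Finset.single_le_sum (f := fun j => |Lf i j|)
      (fun j _ => abs_nonneg _) (Finset.mem_univ j)
    have h2 : 0 ≤ ∑ i, |Lg i| := by positivity
    have h3 := le_abs_self (Lf i j)
    linarith
  have H : ∀ t ≥ (0 : ℝ), AuxAt c f0 fc g Ienv L M t := by
    intro t ht
    have fcL : ∀ i j, j ≠ i → ∀ s ∈ Set.Icc 0 (c i), ∀ r ∈ Set.Icc 0 (c i),
        |fc i j t s - fc i j t r| ≤ L * |s - r| := fun i j hij s hs r hr =>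
      (hLf i j hij t ht s hs r hr).trans
        (mul_le_mul_of_nonneg_right (hLf' i j) (abs_nonneg _))
    have gL : ∀ i, ∀ s ∈ Set.Icc 0 (c i), ∀ r ∈ Set.Icc 0 (c i),
        |g i t s - g i t r| ≤ L * |s - r| := fun i s hs r hr =>
      (hLg i t ht s hs r hr).trans
        (mul_le_mul_of_nonneg_right (hLg' i) (abs_nonneg _))
    refine ⟨hL0, hM0, fun i s hs => (hf i).2.1 t ht s hs,
      fun i j hij s hs => (hfc i j hij).2.1 t ht s hs, ?_, fcL,
      fun i j hij => (hA2 t ht i).2.2.2 j hij, fun i s hs => (hg i).2.1 t ht s hs, ?_, gL,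
      fun i => (hA2 t ht i).2.2.1, fun i => hA3 t ht i, hA4 t ht, hA5 t ht, hA6 t ht, ?_⟩
    · intro i j hij s hs
      have h1 := fcL i j hij s hs (c i) ⟨(hc i).le, le_rfl⟩
      rw [(hA2 t ht i).2.2.2 j hij, sub_zero] at h1
      refine (le_abs_self _).trans (h1.trans ?_)
      rw [hM]
      refine mul_le_mul_of_nonneg_left (le_trans ?_ (hcs i)) hL0
      rw [abs_le]; constructor <;> linarith [hs.1, hs.2]
    · intro i s hs
      have h1 := gL i s hs 0 ⟨le_rfl, (hc i).le⟩
      rw [(hA2 t ht i).2.2.1, sub_zero] at h1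
      refine (le_abs_self _).trans (h1.trans ?_)
      rw [hM]
      refine mul_le_mul_of_nonneg_left (le_trans ?_ (hcs i)) hL0
      rw [abs_le]; constructor <;> linarith [hs.1, hs.2]
    · intro i s hs
      have h1 := hA6 t ht i ⟨le_rfl, (hc i).le⟩ hs hs.1
      rw [(hA2 t ht i).1] at h1
      exact le_antisymm h1 ((hI i).2.1 t ht s hs)
  obtain ⟨κ, T, hκ, hT, hev⟩ := aux_ev hc H an han _ (by simp only []; omega) hf0n h hhmono hfii n
  have hn' : (0 : ℝ) < n := by exact_mod_cast hn
  have hn1 : (1 : ℝ) ≤ n := by exact_mod_cast hn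
  have hC : 0 ≤ L * M := mul_nonneg hL0 hM0
  have hden : 0 < 4 * (L * M) * n ^ 2 + κ := by positivity
  obtain ⟨ε, hε⟩ : ∃ ε, ε = κ / (4 * (L * M) * n ^ 2 + κ) := ⟨_, rfl⟩
  have hε0 : 0 < ε := by rw [hε]; positivity
  have hε1 : ε ≤ 1 := by
    rw [hε, div_le_one hden]
    have : 0 ≤ 4 * (L * M) * (n : ℝ) ^ 2 := by positivity
    linarith
  have hεκ : 2 * (L * M) * (n * ε) * n ≤ κ / 2 := by
    have h1 : ε * (4 * (L * M) * n ^ 2 + κ) = κ := by rw [hε]; field_simp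
    have h2 : 0 ≤ ε * κ := by positivity
    nlinarith
  obtain ⟨w, d, hw1, hwn, hdε, hd1, hw, hch⟩ := aux_weights n ε hε0 hε1
  have hd : ∀ i, 0 ≤ d i := fun i => (by positivity : (0 : ℝ) ≤ ε ^ n).trans (hdε i)
  have hη : 0 ≤ n * ε := by positivity
  obtain ⟨lam, hlam⟩ : ∃ lam, lam = κ / 2 * ε ^ n / n := ⟨_, rfl⟩
  have hlam0 : 0 < lam := by rw [hlam]; positivity
  obtain ⟨b, hb⟩ : ∃ b, b = 2 * (L * M) * (n * ε) * n := ⟨_, rfl⟩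
  have hb0 : 0 ≤ b := by rw [hb]; positivity
  refine ⟨lam, hlam0, n * Real.exp ((b + lam) * T), ?_, ?_⟩
  · have : 1 ≤ Real.exp ((b + lam) * T) := Real.one_le_exp (by positivity)
    nlinarith
  intro ξ₁ h₁ ξ₂ h₂ t ht
  obtain ⟨hi1, hx⟩ := hφ ξ₁ h₁
  obtain ⟨hi2, hy⟩ := hφ ξ₂ h₂
  have out0 : ∀ t ≥ (0 : ℝ), ∀ k, 0 ≤ auxOut f0 fc t (φ t ξ₁) k := by
    intro t ht k
    unfold auxOut
    split_ifs with hk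
    · refine (H t ht).fc0 _ _ ?_ _ ((hx t ht).1 _)
      intro h; have := congrArg Fin.val h; simp at this
    · exact (H t ht).f00 _ _ ((hx t ht).1 _)
  have V1 := aux_V H w d 0 (n * ε) hη le_rfl hd hd1 hw1 hw hch (fun t => φ t ξ₁) (fun t => φ t ξ₂)
    hx hy 0 le_rfl out0 b (fun i => by
      rw [← hb, sub_zero]
      exact mul_le_mul_of_nonneg_left ((hd1 i).trans (hw1 i)) hb0)
  have V2 := aux_V H w d κ (n * ε) hη hκ.le hd hd1 hw1 hw hch (fun t => φ t ξ₁) (fun t => φ t ξ₂)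
    hx hy T hT (fun t ht k => hev (fun t => φ t ξ₁) hx t ht k (by omega)) (-lam) (fun i => by
      have h1 : lam * w i ≤ κ / 2 * d i := by
        calc lam * w i ≤ lam * n := mul_le_mul_of_nonneg_left (hwn i) hlam0.le
          _ = κ / 2 * ε ^ n := by rw [hlam]; field_simp
          _ ≤ κ / 2 * d i := mul_le_mul_of_nonneg_left (hdε i) (by positivity)
      have h2 := mul_le_mul_of_nonneg_right hεκ (hd i)
      linarith)
  simp only [hi1, hi2, sub_zero] at V1
  have hV0 : ∑ i, w i * |ξ₁ i - ξ₂ i| ≤ n * onenorm (ξ₁ - ξ₂) := by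
    unfold onenorm
    rw [Finset.mul_sum]
    exact Finset.sum_le_sum fun i _ => mul_le_mul_of_nonneg_right (hwn i) (abs_nonneg _)
  have hVn : 0 ≤ ∑ i, w i * |ξ₁ i - ξ₂ i| :=
    Finset.sum_nonneg fun i _ => mul_nonneg (by linarith [hw1 i]) (abs_nonneg _)
  have hVt : onenorm (φ t ξ₁ - φ t ξ₂) ≤ ∑ i, w i * |φ t ξ₁ i - φ t ξ₂ i| := by
    unfold onenorm
    exact Finset.sum_le_sum fun i _ => le_mul_of_one_le_left (abs_nonneg _) (hw1 i)
  have key : ∑ i, w i * |φ t ξ₁ i - φ t ξ₂ i| ≤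
      (∑ i, w i * |ξ₁ i - ξ₂ i|) * Real.exp ((b + lam) * T + -lam * t) := by
    rcases le_total t T with h | h
    · refine (V1 t ht).trans (mul_le_mul_of_nonneg_left ?_ hVn)
      rw [Real.exp_le_exp]; nlinarith
    · refine (V2 t h).trans ?_
      refine (mul_le_mul_of_nonneg_right (V1 T hT) (Real.exp_pos _).le).trans (le_of_eq ?_)
      rw [mul_assoc, ← Real.exp_add]; congr 2; ring
  calc onenorm (φ t ξ₁ - φ t ξ₂) ≤ _ := hVt
    _ ≤ _ := key
    _ ≤ (n * onenorm (ξ₁ - ξ₂)) * Real.exp ((b + lam) * T + -lam * t) :=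
      mul_le_mul_of_nonneg_right hV0 (Real.exp_pos _).le
    _ = _ := by rw [Real.exp_add]; ring
end

section
/- Fix c ∈ (0,∞)ⁿ and the box 𝒳 = [0,c₁] × ⋯ × [0,cₙ]. Let f : [0,∞) × 𝒳 → ℝⁿ be continuous, Lipschitz continuous in its second argument uniformly in the first on compact sets, and such that x ↦ f(t,x) is type K on 𝒳 for each t ≥ 0. Suppose there is a map φ : [0,∞) × 𝒳 → 𝒳 such that for every ξ ∈ 𝒳, φ(0,ξ) = ξ and t ↦ φ(t,ξ) is differentiable with ∂_t φ(t,ξ) = f(t, φ(t,ξ)) for all t ≥ 0. Let L₂,…,Lₙ ≥ 0 and aₙ > 0 be constants and, for i = 2,…,n, let h_i : ℝ → ℝ be nonincreasing functions with h_i(z) > 0 for all z ∈ [0,c_i). Assume that for all t ≥ 0 and z ∈ 𝒳: f_i(t,z) ≤ L_i (c_i − z_i) − z_i h_{i+1}(z_{i+1}) for i = 2,…,n−1, and fₙ(t,z) ≤ Lₙ (cₙ − zₙ) − zₙ aₙ. Then for every τ > 0 there exist s₂ ∈ [0,c₂),…,sₙ ∈ [0,cₙ) such that φ_i(t,ξ)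 ≤ s_i for all t ≥ τ, all ξ ∈ 𝒳, and all i = 2,…,n. -/
open Finset

/-- A map `h` is type K on `D ⊆ ℝⁿ` if `h_i a ≤ h_i b` whenever `a, b ∈ D`
satisfy `a ≤ b` componentwise and `a_i = b_i`. -/
def IsTypeKOn {n : ℕ} (h : (Fin n → ℝ) → (Fin n → ℝ)) (D : Set (Fin n → ℝ)) : Prop :=
  ∀ a ∈ D, ∀ b ∈ D, a ≤ b → ∀ i, a i = b i → h a i ≤ h b i

theorem decay_aux (L a c δ : ℝ) (hL : 0 ≤ L) (ha : 0 < a) (hc : 0 < c) (hδ : 0 < δ) :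
    ∃ s ∈ Set.Ico 0 c, ∀ (t0 : ℝ) (u u' : ℝ → ℝ), (∀ t ≥ t0, HasDerivAt u (u' t) t) →
      (∀ t ≥ t0, u' t ≤ L * (c - u t) - u t * a) → u t0 ≤ c → ∀ t ≥ t0 + δ, u t ≤ s := by
  have hk : 0 < L + a := by linarith
  obtain ⟨k, hkd⟩ : ∃ k, k = L + a := ⟨_, rfl⟩
  rw [← hkd] at hk
  obtain ⟨m, hm⟩ : ∃ m, m = L * c / k := ⟨_, rfl⟩
  have hmk : m * k = L * c := by rw [hm]; field_simp
  have hm0 : 0 ≤ m := by rw [hm]; positivity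
  have hmc : m < c := by
    rw [hm, div_lt_iff₀ hk, hkd]; nlinarith [mul_pos ha hc]
  have he : Real.exp (-(k * δ)) < 1 := by
    rw [Real.exp_lt_one_iff]; nlinarith [mul_pos hk hδ]
  have he0 := Real.exp_pos (-(k * δ))
  refine ⟨m + (c - m) * Real.exp (-(k * δ)), ⟨?_, ?_⟩, ?_⟩
  · have := mul_pos (sub_pos.2 hmc) he0
    linarith
  · nlinarith [mul_pos (sub_pos.2 hmc) (sub_pos.2 he)]
  intro t0 u u' hu hb h0 t ht
  have hd : ∀ x ≥ t0, HasDerivAt (fun x => (u x - m) * Real.exp (k * (x - t0)))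
      (u' x * Real.exp (k * (x - t0)) + (u x - m) * (Real.exp (k * (x - t0)) * (k * 1))) x := by
    intro x hx
    exact ((hu x hx).sub_const m).mul ((((hasDerivAt_id x).sub_const t0).const_mul k).exp)
  have hanti : AntitoneOn (fun x => (u x - m) * Real.exp (k * (x - t0))) (Set.Ici t0) := by
    apply antitoneOn_of_deriv_nonpos (convex_Ici t0)
    · intro x hx
      exact (hd x hx).continuousAt.continuousWithinAt
    · intro x hx
      rw [interior_Ici] at hx
      exact (hd x (le_of_lt hx)).differentiableAt.differentiableWithinAt
    · intro x hx
      rw [interior_Ici] at hx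
      have hx' : t0 ≤ x := le_of_lt hx
      rw [(hd x hx').deriv]
      have h1 := hb x hx'
      have h2 : u' x + (u x - m) * k ≤ 0 := by
        have : (u x - m) * k = u x * L + u x * a - L * c := by rw [sub_mul, hmk, hkd]; ring
        linarith
      have h3 := mul_nonpos_of_nonpos_of_nonneg h2 (Real.exp_pos (k * (x - t0))).le
      linarith
  have h1 := hanti (Set.mem_Ici.2 le_rfl) (Set.mem_Ici.2 (by linarith : t0 ≤ t)) (by linarith)
  simp only [sub_self, mul_zero, Real.exp_zero, mul_one] at h1
  have h2 : u t - m ≤ (c - m) * Real.exp (-(k * (t - t0))) := by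
    rw [Real.exp_neg, ← div_eq_mul_inv, le_div_iff₀ (Real.exp_pos _)]
    linarith
  have h3 : Real.exp (-(k * (t - t0))) ≤ Real.exp (-(k * δ)) := by
    apply Real.exp_le_exp.2
    nlinarith
  have h4 := mul_le_mul_of_nonneg_left h3 (sub_pos.2 hmc).le
  linarith

/-- for a system cooperative in the box `𝒳 = ∏ [0,c_i]` whose
components `i = 2,…,n` (`0`-based: `1 ≤ i`) satisfy the one-sided bounds
`f_i(t,z) ≤ L_i (c_i − z_i) − z_i h_{i+1}(z_{i+1})` (for `i = 2,…,n−1`) and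
`f_n(t,z) ≤ L_n (c_n − z_n) − z_n a_n`, for every `τ > 0` there are
`s_i ∈ [0, c_i)` such that `φ_i(t,ξ) ≤ s_i` for all `t ≥ τ`, `ξ ∈ 𝒳` and
`i = 2,…,n`. -/
theorem stmt17 (n : ℕ) (hn : 0 < n) (c : Fin n → ℝ) (hc : ∀ i, 0 < c i)
    (f : ℝ → (Fin n → ℝ) → (Fin n → ℝ))
    (hcont : ContinuousOn (fun p : ℝ × (Fin n → ℝ) => f p.1 p.2)
      (Set.Ici 0 ×ˢ boxIcc c))
    (hlip : ∀ K ⊆ boxIcc c, IsCompact K → ∃ L : ℝ, ∀ t ≥ (0 : ℝ), ∀ x ∈ K, ∀ y ∈ K,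
      ‖f t x - f t y‖ ≤ L * ‖x - y‖)
    (hK : ∀ t ≥ (0 : ℝ), IsTypeKOn (f t) (boxIcc c))
    (φ : ℝ → (Fin n → ℝ) → (Fin n → ℝ))
    (hφ : ∀ ξ ∈ boxIcc c, φ 0 ξ = ξ ∧ ∀ t ≥ (0 : ℝ), φ t ξ ∈ boxIcc c ∧
      HasDerivAt (fun s => φ s ξ) (f t (φ t ξ)) t)
    (L : Fin n → ℝ) (hL : ∀ i : Fin n, 1 ≤ (i : ℕ) → 0 ≤ L i)
    (an : ℝ) (han : 0 < an)
    (h : Fin n → ℝ → ℝ)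
    (hhmono : ∀ i : Fin n, 1 ≤ (i : ℕ) → Antitone (h i))
    (hhpos : ∀ i : Fin n, 1 ≤ (i : ℕ) → ∀ z ∈ Set.Ico 0 (c i), 0 < h i z)
    (hmid : ∀ t ≥ (0 : ℝ), ∀ z ∈ boxIcc c, ∀ i : Fin n, 1 ≤ (i : ℕ) →
      (hi : (i : ℕ) + 1 < n) →
      f t z i ≤ L i * (c i - z i) - z i * h ⟨(i : ℕ) + 1, hi⟩ (z ⟨(i : ℕ) + 1, hi⟩))
    (hlast : ∀ t ≥ (0 : ℝ), ∀ z ∈ boxIcc c,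
      f t z ⟨n - 1, by omega⟩ ≤
        L ⟨n - 1, by omega⟩ * (c ⟨n - 1, by omega⟩ - z ⟨n - 1, by omega⟩)
          - z ⟨n - 1, by omega⟩ * an) :
    ∀ τ > (0 : ℝ), ∃ s : Fin n → ℝ,
      (∀ i : Fin n, 1 ≤ (i : ℕ) → s i ∈ Set.Ico 0 (c i)) ∧
      ∀ t ≥ τ, ∀ ξ ∈ boxIcc c, ∀ i : Fin n, 1 ≤ (i : ℕ) → φ t ξ i ≤ s i := by
  have hcomp : ∀ ξ ∈ boxIcc c, ∀ i, ∀ t ≥ (0 : ℝ),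
      HasDerivAt (fun s => φ s ξ i) (f t (φ t ξ) i) t := fun ξ hξ i t ht =>
    (hasDerivAt_pi.1 ((hφ ξ hξ).2 t ht).2) i
  have key : ∀ j : ℕ, ∀ i : Fin n, 1 ≤ (i : ℕ) → (i : ℕ) + j + 1 = n → ∀ τ > (0 : ℝ),
      ∃ s ∈ Set.Ico 0 (c i), ∀ t ≥ τ, ∀ ξ ∈ boxIcc c, φ t ξ i ≤ s := by
    intro j
    induction j with
    | zero =>
      intro i hi hin τ hτ
      obtain ⟨s, hs, H⟩ := decay_aux (L i) an (c i) τ (hL i hi) han (hc i) hτ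
      refine ⟨s, hs, fun t ht ξ hξ => ?_⟩
      have hii : i = ⟨n - 1, by omega⟩ := Fin.ext (by simp; omega)
      refine H 0 (fun s => φ s ξ i) (fun t => f t (φ t ξ) i) (fun t ht => hcomp ξ hξ i t ht)
        (fun t ht => ?_) (((hφ ξ hξ).2 0 le_rfl).1 i).2 t (by linarith)
      have := hlast t ht (φ t ξ) ((hφ ξ hξ).2 t ht).1
      rw [← hii] at this
      exact this
    | succ j ih =>
      intro i hi hin τ hτ
      have hi1 : (i : ℕ) + 1 < n := by omega
      obtain ⟨s', hs', H'⟩ := ih ⟨(i : ℕ) + 1, hi1⟩ (by simp) (by simp; omega) (τ / 2) (by linarith)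
      obtain ⟨s, hs, H⟩ := decay_aux (L i) (h ⟨(i : ℕ) + 1, hi1⟩ s') (c i) (τ / 2) (hL i hi)
        (hhpos ⟨(i : ℕ) + 1, hi1⟩ (by simp) s' hs') (hc i) (by linarith)
      refine ⟨s, hs, fun t ht ξ hξ => ?_⟩
      refine H (τ / 2) (fun s => φ s ξ i) (fun t => f t (φ t ξ) i)
        (fun t ht => hcomp ξ hξ i t (by linarith))
        (fun t ht => ?_) (((hφ ξ hξ).2 (τ / 2) (by linarith)).1 i).2 t (by linarith)
      have ht0 : (0 : ℝ) ≤ t := by linarith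
      have hbox := ((hφ ξ hξ).2 t ht0).1
      have h1 := hmid t ht0 (φ t ξ) hbox i hi hi1
      have h2 := hhmono ⟨(i : ℕ) + 1, hi1⟩ (by simp) (H' t ht ξ hξ)
      have h3 := mul_le_mul_of_nonneg_left h2 (hbox i).1
      show f t (φ t ξ) i ≤ L i * (c i - φ t ξ i) - φ t ξ i * h ⟨(i : ℕ) + 1, hi1⟩ s'
      linarith
  intro τ hτ
  have key2 : ∀ i : Fin n, ∃ s, 1 ≤ (i : ℕ) →
      s ∈ Set.Ico 0 (c i) ∧ ∀ t ≥ τ, ∀ ξ ∈ boxIcc c, φ t ξ i ≤ s := by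
    intro i
    by_cases hi : 1 ≤ (i : ℕ)
    · obtain ⟨s, hs, H⟩ := key (n - 1 - i) i hi (by omega) τ hτ
      exact ⟨s, fun _ => ⟨hs, H⟩⟩
    · exact ⟨0, fun h => absurd h hi⟩
  choose s hs using key2
  exact ⟨s, fun i hi => (hs i hi).1, fun t ht ξ hξ i hi => (hs i hi).2 t ht ξ hξ⟩
end

section
/- Let 𝒳 ⊆ [0,∞)^n, let F : [0,∞) × 𝒳 → ℝ^{n×n} and g : [0,∞) × 𝒳 → ℝⁿ with g(t,x) ≥ x componentwise for all t ≥ 0 and x ∈ 𝒳. Fix 1 < l ≤ n, a ∈ (0,∞)^l and b ≥ 0, and suppose F(t,x) ∈ ℱ(a,b,l) for all t ≥ 0 and x ∈ 𝒳. Then there exist constants λ > 0 and γ ≥ 1, depending only on n, l, a and b, such that every differentiable q : [0,∞) → 𝒳 satisfying q̇(t) = F(t,q(t)) g(t,q(t)) for all t ≥ 0 obeys |q(t)|₁ ≤ γ e^{−λ t} |q(0)|₁ for all t ≥ 0; i.e. the null solution is exponentially stable with respect to 𝒳. -/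
open Finset

/-- An `n × n` real matrix is compartmental if it is Metzler (nonnegative
off-diagonal entries) and all of its column sums are nonpositive. -/
def IsCompartmental {n : ℕ} (F : Matrix (Fin n) (Fin n) ℝ) : Prop :=
  (∀ i j : Fin n, i ≠ j → 0 ≤ F i j) ∧ ∀ i : Fin n, (∑ k, F k i) ≤ 0

/-- The set `ℱ(a,b,l)` of compartmental matrices (`0`-based indices). -/
def MemCalF {n l : ℕ} (hl : 1 < l) (hln : l ≤ n) (a : Fin l → ℝ) (b : ℝ)
    (F : Matrix (Fin n) (Fin n) ℝ) : Prop :=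
  IsCompartmental F ∧
  (∀ i j : Fin n, i < j → F i j ≤ b) ∧
  (∀ i : Fin n, (hi : (i : ℕ) + 1 < l) →
    a ⟨i, Nat.lt_of_succ_lt hi⟩ ≤ ∑ k ∈ univ.filter (fun k : Fin n => i < k), F k i) ∧
  (∀ i : Fin n, l - 1 ≤ (i : ℕ) → (∑ k, F k i) ≤ -(a ⟨l - 1, by omega⟩))

lemma col_bound {n l : ℕ} (hl : 1 < l) (hln : l ≤ n)
    (a : Fin l → ℝ) (b : ℝ) (hb : 0 ≤ b) (α : ℝ) (hα : 0 < α) (hαa : ∀ i, α ≤ a i)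
    (M C m : ℝ) (hM : (M - 1) * α = b * n + 1) (hm : m * α = b * n * M ^ n + 1)
    (hC : C = M ^ n + m) (F : Matrix (Fin n) (Fin n) ℝ) (hF : MemCalF hl hln a b F)
    (i : Fin n) : ∑ k : Fin n, (C - M ^ (k : ℕ)) * F k i ≤ -1 := by
  obtain ⟨⟨hoff, hcol⟩, hup, hlow, hout⟩ := hF
  have hn0 : (0 : ℝ) ≤ n := Nat.cast_nonneg n
  have hbn : 0 ≤ b * n := mul_nonneg hb hn0
  have hM1 : 1 ≤ M := by
    by_contra h
    push Not at h
    nlinarith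
  have hMn : 1 ≤ M ^ n := one_le_pow₀ hM1
  have hMi : 1 ≤ M ^ (i : ℕ) := one_le_pow₀ hM1
  have hMin : M ^ (i : ℕ) ≤ M ^ n := pow_le_pow_right₀ hM1 i.2.le
  have hm0 : 0 < m := by
    by_contra h
    push Not at h
    nlinarith [mul_nonneg hbn (by linarith : (0 : ℝ) ≤ M ^ n), mul_nonneg (neg_nonneg.2 h) hα.le]
  have hsplit : ∑ k : Fin n, (C - M ^ (k : ℕ)) * F k i
      = ∑ k : Fin n, (M ^ (i : ℕ) - M ^ (k : ℕ)) * F k i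
        + (C - M ^ (i : ℕ)) * ∑ k, F k i := by
    rw [Finset.mul_sum, ← Finset.sum_add_distrib]
    refine Finset.sum_congr rfl fun k _ => ?_
    ring
  have hterm : ∀ k : Fin n, (M ^ (i : ℕ) - M ^ (k : ℕ)) * F k i
      ≤ (if i < k then -((M - 1) * M ^ (i : ℕ)) * F k i else 0) + b * M ^ (i : ℕ) := by
    intro k
    have hMk : 1 ≤ M ^ (k : ℕ) := one_le_pow₀ hM1
    have hbM : 0 ≤ b * M ^ (i : ℕ) := mul_nonneg hb (by linarith)
    rcases lt_trichotomy i k with h | h | h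
    · rw [if_pos h]
      have h0 := hoff k i h.ne'
      have h1 : M ^ ((i : ℕ) + 1) ≤ M ^ (k : ℕ) := pow_le_pow_right₀ hM1 h
      rw [pow_succ] at h1
      have : (M ^ (i : ℕ) - M ^ (k : ℕ)) * F k i ≤ -((M - 1) * M ^ (i : ℕ)) * F k i :=
        mul_le_mul_of_nonneg_right (by linarith) h0
      linarith
    · subst h
      simpa using hbM
    · rw [if_neg h.not_gt]
      have h0 := hoff k i h.ne
      have h1 := hup k i h
      have h2 : M ^ (k : ℕ) ≤ M ^ (i : ℕ) := pow_le_pow_right₀ hM1 h.le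
      have : (M ^ (i : ℕ) - M ^ (k : ℕ)) * F k i ≤ M ^ (i : ℕ) * b :=
        mul_le_mul (by linarith) h1 h0 (by linarith)
      linarith
  have hsum : ∑ k : Fin n, (M ^ (i : ℕ) - M ^ (k : ℕ)) * F k i
      ≤ -((M - 1) * M ^ (i : ℕ)) * ∑ k ∈ univ.filter (fun k : Fin n => i < k), F k i
        + n * (b * M ^ (i : ℕ)) := by
    refine (Finset.sum_le_sum fun k _ => hterm k).trans (le_of_eq ?_)
    rw [Finset.sum_add_distrib, ← Finset.sum_filter, ← Finset.mul_sum]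
    simp
  set S := ∑ k ∈ univ.filter (fun k : Fin n => i < k), F k i with hS
  have hS0 : 0 ≤ S := Finset.sum_nonneg fun k hk => hoff k i (Finset.mem_filter.1 hk).2.ne'
  have hMM : 0 ≤ (M - 1) * M ^ (i : ℕ) := mul_nonneg (by linarith) (by linarith)
  have hp : m ≤ C - M ^ (i : ℕ) := by linarith
  have hc := hcol i
  rw [hsplit]
  by_cases hi : (i : ℕ) + 1 < l
  · have h1 : α ≤ S := (hαa _).trans (hlow i hi)
    have h2 := mul_le_mul_of_nonneg_left h1 hMM
    have h3 : (C - M ^ (i : ℕ)) * ∑ k, F k i ≤ 0 :=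
      mul_nonpos_of_nonneg_of_nonpos (by linarith) hc
    have h4 : (M - 1) * M ^ (i : ℕ) * α = (b * n + 1) * M ^ (i : ℕ) := by rw [← hM]; ring
    linarith
  · have h1 : ∑ k, F k i ≤ -α := by
      have := hout i (by omega)
      have := hαa ⟨l - 1, by omega⟩
      linarith
    have h2 := mul_nonneg hMM hS0
    have h3 : (C - M ^ (i : ℕ)) * ∑ k, F k i ≤ (C - M ^ (i : ℕ)) * (-α) :=
      mul_le_mul_of_nonneg_left h1 (by linarith)
    have h4 : m * α ≤ (C - M ^ (i : ℕ)) * α := mul_le_mul_of_nonneg_right hp hα.le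
    have h5 := mul_le_mul_of_nonneg_left hMin hbn
    linarith

/-- there are `λ > 0` and `γ ≥ 1` depending only on `n`, `l`, `a`
and `b` such that for every state space `𝒳 ⊆ [0,∞)^n`, every `F` taking values
in `ℱ(a,b,l)` on `[0,∞) × 𝒳` and every `g` with `g(t,x) ≥ x` on `[0,∞) × 𝒳`,
all solutions of `q̇ = F(t,q) g(t,q)` staying in `𝒳` satisfy
`|q(t)|₁ ≤ γ e^{−λt} |q(0)|₁`. -/
theorem stmt18 (n l : ℕ) (hn : 0 < n) (hl : 1 < l) (hln : l ≤ n)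
    (a : Fin l → ℝ) (ha : ∀ i, 0 < a i) (b : ℝ) (hb : 0 ≤ b) :
    ∃ lam : ℝ, 0 < lam ∧ ∃ γ : ℝ, 1 ≤ γ ∧
      ∀ X : Set (Fin n → ℝ), X ⊆ {x : Fin n → ℝ | ∀ i, 0 ≤ x i} →
      ∀ F : ℝ → (Fin n → ℝ) → Matrix (Fin n) (Fin n) ℝ,
      ∀ g : ℝ → (Fin n → ℝ) → (Fin n → ℝ),
      (∀ t ≥ (0 : ℝ), ∀ x ∈ X, x ≤ g t x) →
      (∀ t ≥ (0 : ℝ), ∀ x ∈ X, MemCalF hl hln a b (F t x)) →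
      ∀ q : ℝ → Fin n → ℝ,
      (∀ t ≥ (0 : ℝ), q t ∈ X ∧
        HasDerivAt q ((F t (q t)).mulVec (g t (q t))) t) →
      ∀ t ≥ (0 : ℝ), onenorm (q t) ≤ γ * Real.exp (-lam * t) * onenorm (q 0) := by
  have : Nonempty (Fin l) := ⟨⟨0, by omega⟩⟩
  obtain ⟨i0, hi0⟩ := Finite.exists_min a
  set α := a i0 with hαdef
  have hα : 0 < α := ha i0
  obtain ⟨M, hM⟩ : ∃ M : ℝ, (M - 1) * α = b * n + 1 :=
    ⟨1 + (b * n + 1) / α, by field_simp; ring⟩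
  obtain ⟨m, hm⟩ : ∃ m : ℝ, m * α = b * n * M ^ n + 1 :=
    ⟨(b * n * M ^ n + 1) / α, by field_simp⟩
  obtain ⟨C, hC⟩ : ∃ C : ℝ, C = M ^ n + m := ⟨_, rfl⟩
  have hbn : 0 ≤ b * n := mul_nonneg hb (Nat.cast_nonneg n)
  have hM1 : 1 ≤ M := by
    by_contra h
    push Not at h
    nlinarith
  have hMn : 1 ≤ M ^ n := one_le_pow₀ hM1
  have hm0 : 0 < m := by
    by_contra h
    push Not at h
    nlinarith [mul_nonneg hbn (by linarith : (0 : ℝ) ≤ M ^ n), mul_nonneg (neg_nonneg.2 h) hα.le]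
  have hC0 : 0 < C := by linarith
  refine ⟨1 / C, by positivity, C / m, (one_le_div hm0).2 (by linarith), ?_⟩
  intro X hX F g hg hF q hq t ht
  have hq0 : ∀ s ≥ (0 : ℝ), ∀ i, 0 ≤ q s i := fun s hs i => hX (hq s hs).1 i
  have hone : ∀ s ≥ (0 : ℝ), onenorm (q s) = ∑ i, q s i := fun s hs =>
    Finset.sum_congr rfl fun i _ => abs_of_nonneg (hq0 s hs i)
  let V : ℝ → ℝ := fun s => ∑ k : Fin n, (C - M ^ (k : ℕ)) * q s k
  have hV1 : ∀ s ≥ (0 : ℝ), m * onenorm (q s) ≤ V s := by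
    intro s hs
    rw [hone s hs, Finset.mul_sum]
    refine Finset.sum_le_sum fun k _ => mul_le_mul_of_nonneg_right ?_ (hq0 s hs k)
    have : M ^ (k : ℕ) ≤ M ^ n := pow_le_pow_right₀ hM1 k.2.le
    linarith
  have hV2 : ∀ s ≥ (0 : ℝ), V s ≤ C * onenorm (q s) := by
    intro s hs
    rw [hone s hs, Finset.mul_sum]
    refine Finset.sum_le_sum fun k _ => mul_le_mul_of_nonneg_right ?_ (hq0 s hs k)
    have : 1 ≤ M ^ (k : ℕ) := one_le_pow₀ hM1
    linarith
  have hVd : ∀ s ≥ (0 : ℝ), ∃ d, HasDerivAt V d s ∧ d ≤ -onenorm (q s) := by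
    intro s hs
    have hd := hasDerivAt_pi.1 (hq s hs).2
    refine ⟨_, HasDerivAt.fun_sum fun k _ => (hd k).const_mul (C - M ^ (k : ℕ)), ?_⟩
    rw [hone s hs]
    have hG := hg s hs _ (hq s hs).1
    have hFF := hF s hs _ (hq s hs).1
    generalize F s (q s) = A at hFF ⊢
    generalize g s (q s) = G at hG ⊢
    have : ∑ k : Fin n, (C - M ^ (k : ℕ)) * (A.mulVec G) k
        = ∑ i, (∑ k : Fin n, (C - M ^ (k : ℕ)) * A k i) * G i := by
      simp only [Matrix.mulVec, dotProduct, Finset.mul_sum, Finset.sum_mul]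
      rw [Finset.sum_comm]
      refine Finset.sum_congr rfl fun i _ => Finset.sum_congr rfl fun k _ => by ring
    rw [this, ← Finset.sum_neg_distrib]
    refine Finset.sum_le_sum fun i _ => ?_
    have h1 := col_bound hl hln a b hb α hα hi0 M C m hM hm hC A hFF i
    have h2 := hG i
    have h3 := hq0 s hs i
    have h4 := mul_le_mul_of_nonneg_right h1 (h3.trans h2)
    linarith
  choose! d hd hdle using hVd
  let W : ℝ → ℝ := fun s => V s * Real.exp (1 / C * s)
  have hW : ∀ s ≥ (0 : ℝ), HasDerivAt W
      (d s * Real.exp (1 / C * s) + V s * (Real.exp (1 / C * s) * (1 / C * 1))) s := by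
    intro s hs
    exact (hd s hs).mul (((hasDerivAt_id s).const_mul (1 / C)).exp)
  have hanti : AntitoneOn W (Set.Ici 0) := by
    refine antitoneOn_of_deriv_nonpos (convex_Ici 0)
      (fun s hs => (hW s hs).continuousAt.continuousWithinAt) ?_ ?_
    · intro s hs
      rw [interior_Ici] at hs
      exact (hW s (le_of_lt hs)).differentiableAt.differentiableWithinAt
    · intro s hs
      rw [interior_Ici] at hs
      have hs' : s ≥ 0 := le_of_lt hs
      rw [(hW s hs').deriv]
      have h1 : V s * (1 / C) ≤ onenorm (q s) := by
        rw [mul_one_div, div_le_iff₀ hC0]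
        linarith [hV2 s hs']
      have h2 : d s + V s * (1 / C) ≤ 0 := by linarith [hdle s hs']
      have h3 := mul_nonpos_of_nonpos_of_nonneg h2 (Real.exp_pos (1 / C * s)).le
      linarith
  have hWt : W t ≤ W 0 := hanti (Set.mem_Ici.2 le_rfl) (Set.mem_Ici.2 ht) ht
  have hW0 : W 0 = V 0 := by simp [W]
  have h1 : m * onenorm (q t) * Real.exp (1 / C * t) ≤ C * onenorm (q 0) := by
    calc _ ≤ V t * Real.exp (1 / C * t) :=
          mul_le_mul_of_nonneg_right (hV1 t ht) (Real.exp_pos _).le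
      _ ≤ V 0 := hW0 ▸ hWt
      _ ≤ _ := hV2 0 le_rfl
  have h2 : onenorm (q t) ≤ C * onenorm (q 0) / (m * Real.exp (1 / C * t)) := by
    rw [le_div_iff₀ (by positivity)]
    linarith
  refine h2.trans (le_of_eq ?_)
  rw [neg_mul, Real.exp_neg]
  field_simp
end

section
/- Let 𝒳 ⊆ [0,∞)^n be connected with [0,ε)^n ⊆ 𝒳 for some ε > 0. Let F : [0,∞) × 𝒳 → ℝ^{n×n} take compartmental values, and let g : [0,∞) × 𝒳 → ℝⁿ satisfy g_i(t,x) ≥ x_i and g_i(t,x) = 0 whenever x_i = 0, for all t ≥ 0, x ∈ 𝒳 and i. Define f_{0i}(t,x) = −∑_{k=1}^n F_{ki}(t,x) and f_{ij}(t,x) = F_{ij}(t,x) for i ≠ j, and assume each of these functions is either identically zero on [0,∞) × 𝒳 or satisfies 0 < inf f_{ij} ≤ sup f_{ij} < +∞ over [0,∞) × 𝒳. Assume the system q̇(t) = F(t,q(t)) g(t,q(t)) has for every ξ ∈ 𝒳 a unique differentiable solution φ(·,ξ) : [0,∞) → 𝒳 with φ(0,ξ) = ξ. Then the null solution is asymptotically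 stable with respect to 𝒳 (i.e. there exists β ∈ 𝒦ℒ with |φ(t,ξ)|₁ ≤ β(|ξ|₁, t) for all t ≥ 0 and ξ ∈ 𝒳) if and only if F(0,0) is outflow connected; and if F(0,0) is outflow connected then the null solution is exponentially stable with respect to 𝒳, i.e. there exist λ > 0 and γ ≥ 1 with |φ(t,ξ)|₁ ≤ γ e^{−λ t} |ξ|₁ for all t ≥ 0 and ξ ∈ 𝒳. -/
open Finset

/-- Vertex `i` is an outflow vertex when the `i`-th column sum is negative. -/
def OutflowVertex {n : ℕ} (F : Matrix (Fin n) (Fin n) ℝ) (i : Fin n) : Prop :=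
  (∑ k, F k i) < 0

/-- `F` is outflow connected: the set of outflow vertices is nonempty and every
vertex that is not an outflow vertex has a (directed) path to some outflow
vertex, where there is an edge from `u` to `v` when `F v u > 0`. -/
def OutflowConnected {n : ℕ} (F : Matrix (Fin n) (Fin n) ℝ) : Prop :=
  (∃ i, OutflowVertex F i) ∧
  ∀ i, ¬ OutflowVertex F i → ∃ j, OutflowVertex F j ∧
    Relation.ReflTransGen (fun u v : Fin n => 0 < F v u) i j

/-- The class `𝒦ℒ` of comparison functions. -/
def IsKL (β : ℝ → ℝ → ℝ) : Prop :=
  ContinuousOn (fun p : ℝ × ℝ => β p.1 p.2) (Set.Ici 0 ×ˢ Set.Ici 0) ∧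
  (∀ r ∈ Set.Ici (0 : ℝ), ∀ t ∈ Set.Ici (0 : ℝ), 0 ≤ β r t) ∧
  (∀ t ∈ Set.Ici (0 : ℝ), β 0 t = 0) ∧
  (∀ t ∈ Set.Ici (0 : ℝ), StrictMonoOn (fun r => β r t) (Set.Ici 0)) ∧
  (∀ r ∈ Set.Ici (0 : ℝ), Filter.Tendsto (fun t => β r t) Filter.atTop (nhds 0))

lemma aux_col {n : ℕ} (A : Matrix (Fin n) (Fin n) ℝ) (hA : IsCompartmental A)
    (d : Fin n → ℕ) (D : ℕ) (hD : ∀ i, d i ≤ D) (r m M : ℝ) (hr : 0 < r) (hr2 : r ≤ 1/2)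
    (hm : 0 < m) (hM : 0 ≤ M) (hrM : n * M * r ≤ m / 4)
    (hAM : ∀ i j, i ≠ j → A i j ≤ M)
    (hd : ∀ j, (m ≤ -(∑ k, A k j)) ∨ ∃ i, i ≠ j ∧ d i < d j ∧ m ≤ A i j) (j : Fin n) :
    ∑ i, (1 - r ^ (d i + 1)) * A i j ≤ -(m * r ^ D / 4) := by
  have hr1 : r ≤ 1 := by linarith
  have hsplit : ∑ i, (1 - r ^ (d i + 1)) * A i j
      = ∑ i, (r ^ (d j + 1) - r ^ (d i + 1)) * A i j + (1 - r ^ (d j + 1)) * ∑ i, A i j := by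
    rw [Finset.mul_sum, ← Finset.sum_add_distrib]
    exact Finset.sum_congr rfl fun i _ => by ring
  have hpow : ∀ k, 0 < r ^ k := fun k => pow_pos hr k
  have hterm : ∀ i, (r ^ (d j + 1) - r ^ (d i + 1)) * A i j ≤ r ^ (d j + 1) * M := by
    intro i
    by_cases h : i = j
    · subst h
      simp only [sub_self, zero_mul]
      exact mul_nonneg (hpow _).le hM
    · have h1 := hA.1 i j h
      have h2 := hAM i j h
      nlinarith [hpow (d j + 1), hpow (d i + 1), mul_nonneg (hpow (d i + 1)).le h1,
        mul_le_mul_of_nonneg_left h2 (hpow (d j + 1)).le]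
  have hdD : r ^ D ≤ r ^ (d j) := pow_le_pow_of_le_one hr.le hr1 (hD j)
  have hq : r ^ (d j + 1) = r ^ (d j) * r := pow_succ _ _
  have hd1 : r ^ (d j) ≤ 1 := pow_le_one₀ hr.le hr1
  have hmD : m * r ^ D ≤ m * r ^ (d j) := mul_le_mul_of_nonneg_left hdD hm.le
  have hbig : n * (r ^ (d j + 1) * M) ≤ r ^ (d j) * (m / 4) := by
    calc n * (r ^ (d j + 1) * M) = r ^ (d j) * (n * M * r) := by rw [hq]; ring
      _ ≤ _ := mul_le_mul_of_nonneg_left hrM (hpow _).le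
  have hhalf : r ^ (d j) * m * (1/2) ≤ r ^ (d j) * m * (1 - r) :=
    mul_le_mul_of_nonneg_left (by linarith) (mul_nonneg (hpow _).le hm.le)
  have hwj : 1 / 2 ≤ 1 - r ^ (d j + 1) := by
    rw [hq]; nlinarith [hpow (d j)]
  rw [hsplit]
  rcases hd j with h | ⟨i0, hne, hlt, hmA⟩
  · have hs : ∑ i, (r ^ (d j + 1) - r ^ (d i + 1)) * A i j ≤ n * (r ^ (d j + 1) * M) := by
      refine (Finset.sum_le_sum fun i _ => hterm i).trans ?_
      simp
    have h3 : (1 - r ^ (d j + 1)) * ∑ i, A i j ≤ (1 / 2) * (- m) := by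
      nlinarith
    nlinarith
  · have hs : ∑ i, (r ^ (d j + 1) - r ^ (d i + 1)) * A i j
        ≤ n * (r ^ (d j + 1) * M) - r ^ (d j) * m * (1 - r) := by
      have : ∀ i ∈ (Finset.univ : Finset (Fin n)), (r ^ (d j + 1) - r ^ (d i + 1)) * A i j
          ≤ r ^ (d j + 1) * M + (if i = i0 then -(r ^ (d j) * m * (1 - r)) else 0) := by
        intro i _
        split_ifs with h
        · subst h
          have h1 : r ^ (d j) ≤ r ^ (d i + 1) := pow_le_pow_of_le_one hr.le hr1 hlt
          have h2 : r ^ (d j + 1) - r ^ (d i + 1) ≤ -(r ^ (d j) * (1 - r)) := by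
            rw [hq]; linarith
          have h3 : 0 ≤ r ^ (d j) * (1 - r) := mul_nonneg (hpow _).le (by linarith)
          have h4 : 0 ≤ r ^ (d j + 1) * M := mul_nonneg (hpow _).le hM
          nlinarith [mul_le_mul_of_nonneg_left hmA h3,
            mul_le_mul_of_nonneg_right h2 (hm.le.trans hmA)]
        · simpa using hterm i
      refine (Finset.sum_le_sum this).trans ?_
      rw [Finset.sum_add_distrib]
      simp
    have h3 : (1 - r ^ (d j + 1)) * ∑ i, A i j ≤ 0 :=
      mul_nonpos_of_nonneg_of_nonpos (by linarith) (hA.2 j)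
    nlinarith

lemma aux_rank {n : ℕ} (T : Fin n → Prop) (E : Fin n → Fin n → Prop)
    (h : ∀ i, ∃ j, T j ∧ Relation.ReflTransGen E i j) :
    ∃ d : Fin n → ℕ, ∀ i, T i ∨ ∃ j, d j < d i ∧ E i j := by
  classical
  let R : ℕ → Fin n → Prop := fun k => Nat.rec T (fun _ P i => ∃ j, E i j ∧ P j) k
  have hR : ∀ i, ∃ k, R k i := by
    intro i
    obtain ⟨j, hj, hij⟩ := h i
    induction hij using Relation.ReflTransGen.head_induction_on with
    | refl => exact ⟨0, hj⟩
    | head hab _ ih =>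
      obtain ⟨k, hk⟩ := ih
      exact ⟨k + 1, _, hab, hk⟩
  let d : Fin n → ℕ := fun i => sInf {k | R k i}
  refine ⟨d, fun i => ?_⟩
  have hs : R (d i) i := Nat.sInf_mem (s := {k | R k i}) (hR i)
  rcases hk : d i with _ | k
  · rw [hk] at hs
    exact Or.inl hs
  · rw [hk] at hs
    obtain ⟨j, hij, hj⟩ := hs
    refine Or.inr ⟨j, ?_, hij⟩
    have : d j ≤ k := Nat.sInf_le (s := {k | R k j}) hj
    omega

lemma aux_deriv {n : ℕ} (q : ℝ → Fin n → ℝ) (A : Matrix (Fin n) (Fin n) ℝ) (v w : Fin n → ℝ)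
    (t : ℝ) (h : HasDerivAt q (A.mulVec v) t) :
    HasDerivAt (fun s => ∑ i, w i * q s i) (∑ j, (∑ i, w i * A i j) * v j) t := by
  have h1 := hasDerivAt_pi.1 h
  have h2 : HasDerivAt (fun s => ∑ i, w i * q s i) (∑ i, w i * A.mulVec v i) t :=
    HasDerivAt.fun_sum fun i _ => (h1 i).const_mul (w i)
  convert h2 using 1
  simp only [Matrix.mulVec, dotProduct, Finset.mul_sum, Finset.sum_mul]
  rw [Finset.sum_comm]
  exact Finset.sum_congr rfl fun i _ => Finset.sum_congr rfl fun j _ => by ring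

lemma aux_exp (V V' : ℝ → ℝ) (c : ℝ) (hV : ∀ t ≥ 0, HasDerivAt V (V' t) t)
    (hle : ∀ t ≥ 0, V' t ≤ -c * V t) (t : ℝ) (ht : 0 ≤ t) :
    V t ≤ Real.exp (-c * t) * V 0 := by
  have hd : ∀ s ≥ 0, HasDerivAt (fun s => Real.exp (c * s) * V s)
      (Real.exp (c * s) * (c * 1) * V s + Real.exp (c * s) * V' s) s := fun s hs =>
    (((hasDerivAt_id s).const_mul c).exp).mul (hV s hs)
  have hanti : AntitoneOn (fun s => Real.exp (c * s) * V s) (Set.Ici 0) := by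
    refine antitoneOn_of_deriv_nonpos (convex_Ici 0)
      (fun s hs => (hd s hs).continuousAt.continuousWithinAt) ?_ ?_
    · intro s hs
      rw [interior_Ici] at hs
      exact (hd s (le_of_lt hs)).differentiableAt.differentiableWithinAt
    · intro s hs
      rw [interior_Ici] at hs
      rw [(hd s (le_of_lt hs)).deriv]
      nlinarith [Real.exp_pos (c * s), hle s (le_of_lt hs),
        mul_le_mul_of_nonneg_left (hle s (le_of_lt hs)) (Real.exp_pos (c * s)).le]
  have := hanti (Set.mem_Ici.2 le_rfl) (Set.mem_Ici.2 ht) ht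
  simp only [mul_zero, Real.exp_zero, one_mul] at this
  calc V t = Real.exp (-c * t) * (Real.exp (c * t) * V t) := by
        rw [← mul_assoc, ← Real.exp_add]; simp
    _ ≤ _ := mul_le_mul_of_nonneg_left this (Real.exp_pos _).le

/-- for the compartmental system `q̇ = F(t,q) g(t,q)` on a
connected `𝒳 ⊆ [0,∞)^n` containing `[0,ε)^n`, with each coefficient
`f_{0i}(t,x) = -∑_k F_{ki}(t,x)` and `f_{ij}(t,x) = F_{ij}(t,x)` (`i ≠ j`)
either identically zero or with positive infimum and finite supremum, the null
solution is asymptotically stable with respect to `𝒳` if and only if `F(0,0)`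
is outflow connected; and in that case it is exponentially stable. -/
theorem stmt19 (n : ℕ) (hn : 0 < n) (X : Set (Fin n → ℝ))
    (hXsub : X ⊆ {x : Fin n → ℝ | ∀ i, 0 ≤ x i})
    (hXconn : IsConnected X)
    (ε : ℝ) (hε : 0 < ε) (hXeps : {x : Fin n → ℝ | ∀ i, x i ∈ Set.Ico 0 ε} ⊆ X)
    (F : ℝ → (Fin n → ℝ) → Matrix (Fin n) (Fin n) ℝ)
    (hFcomp : ∀ t ≥ (0 : ℝ), ∀ x ∈ X, IsCompartmental (F t x))
    (g : ℝ → (Fin n → ℝ) → (Fin n → ℝ))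
    (hg : ∀ t ≥ (0 : ℝ), ∀ x ∈ X, ∀ i, x i ≤ g t x i ∧ (x i = 0 → g t x i = 0))
    -- each off-diagonal coefficient is identically zero or bounded away from
    -- zero and infinity
    (hdich : ∀ i j : Fin n, i ≠ j →
      (∀ t ≥ (0 : ℝ), ∀ x ∈ X, F t x i j = 0) ∨
      (∃ m M : ℝ, 0 < m ∧ ∀ t ≥ (0 : ℝ), ∀ x ∈ X,
        m ≤ F t x i j ∧ F t x i j ≤ M))
    -- each outflow coefficient (negative of the column sum) is identically
    -- zero or bounded away from zero and infinity
    (hdich0 : ∀ i : Fin n,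
      (∀ t ≥ (0 : ℝ), ∀ x ∈ X, -(∑ k, F t x k i) = 0) ∨
      (∃ m M : ℝ, 0 < m ∧ ∀ t ≥ (0 : ℝ), ∀ x ∈ X,
        m ≤ -(∑ k, F t x k i) ∧ -(∑ k, F t x k i) ≤ M))
    -- the (unique) flow
    (φ : ℝ → (Fin n → ℝ) → (Fin n → ℝ))
    (hφ : ∀ ξ ∈ X, φ 0 ξ = ξ ∧ ∀ t ≥ (0 : ℝ), φ t ξ ∈ X ∧
      HasDerivAt (fun s => φ s ξ) ((F t (φ t ξ)).mulVec (g t (φ t ξ))) t)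
    (huniq : ∀ ξ ∈ X, ∀ q : ℝ → Fin n → ℝ,
      (q 0 = ξ ∧ ∀ t ≥ (0 : ℝ), q t ∈ X ∧
        HasDerivAt q ((F t (q t)).mulVec (g t (q t))) t) →
      ∀ t ≥ (0 : ℝ), q t = φ t ξ) :
    ((∃ β : ℝ → ℝ → ℝ, IsKL β ∧ ∀ ξ ∈ X, ∀ t ≥ (0 : ℝ),
        onenorm (φ t ξ) ≤ β (onenorm ξ) t) ↔
      OutflowConnected (F 0 0)) ∧
    (OutflowConnected (F 0 0) →
      ∃ lam : ℝ, 0 < lam ∧ ∃ γ : ℝ, 1 ≤ γ ∧ ∀ ξ ∈ X, ∀ t ≥ (0 : ℝ),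
        onenorm (φ t ξ) ≤ γ * Real.exp (-lam * t) * onenorm ξ) := by
  classical
  have h0X : (0 : Fin n → ℝ) ∈ X := hXeps (fun i => ⟨le_rfl, hε⟩)
  have hgnn : ∀ t ≥ (0 : ℝ), ∀ x ∈ X, ∀ i, 0 ≤ g t x i := fun t ht x hx i =>
    (hXsub hx i).trans (hg t ht x hx i).1
  -- exponential stability
  have hexp : OutflowConnected (F 0 0) →
      ∃ lam : ℝ, 0 < lam ∧ ∃ γ : ℝ, 1 ≤ γ ∧ ∀ ξ ∈ X, ∀ t ≥ (0 : ℝ),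
        onenorm (φ t ξ) ≤ γ * Real.exp (-lam * t) * onenorm ξ := by
    intro hoc
    obtain ⟨d, hd⟩ := aux_rank (OutflowVertex (F 0 0)) (fun u v => 0 < F 0 0 v u) (by
      intro i
      by_cases h : OutflowVertex (F 0 0) i
      · exact ⟨i, h, Relation.ReflTransGen.refl⟩
      · exact hoc.2 i h)
    have hMex : ∃ M : ℝ, 0 ≤ M ∧ ∀ i j, i ≠ j → ∀ t ≥ (0 : ℝ), ∀ x ∈ X, F t x i j ≤ M := by
      have : ∀ p : Fin n × Fin n, ∃ M : ℝ, p.1 ≠ p.2 → ∀ t ≥ (0 : ℝ), ∀ x ∈ X,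
          F t x p.1 p.2 ≤ M := by
        intro p
        by_cases h : p.1 = p.2
        · exact ⟨0, fun h' => absurd h h'⟩
        · rcases hdich p.1 p.2 h with h1 | ⟨m, M, _, h1⟩
          · exact ⟨0, fun _ t ht x hx => (h1 t ht x hx).le⟩
          · exact ⟨M, fun _ t ht x hx => (h1 t ht x hx).2⟩
      choose M hM using this
      refine ⟨∑ p, |M p|, Finset.sum_nonneg fun _ _ => abs_nonneg _, fun i j hij t ht x hx => ?_⟩
      exact (hM (i, j) hij t ht x hx).trans ((le_abs_self _).trans
        (Finset.single_le_sum (f := fun p => |M p|) (fun _ _ => abs_nonneg _)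
          (Finset.mem_univ (i, j))))
    obtain ⟨M, hM0, hM⟩ := hMex
    have hmex : ∃ m : ℝ, 0 < m ∧ ∀ j, ∀ t ≥ (0 : ℝ), ∀ x ∈ X,
        (m ≤ -(∑ k, F t x k j)) ∨ ∃ i, i ≠ j ∧ d i < d j ∧ m ≤ F t x i j := by
      have : ∀ j, ∃ m : ℝ, 0 < m ∧ ∀ t ≥ (0 : ℝ), ∀ x ∈ X,
        (m ≤ -(∑ k, F t x k j)) ∨ ∃ i, i ≠ j ∧ d i < d j ∧ m ≤ F t x i j := by
        intro j
        rcases hd j with h | ⟨i, hlt, hpos⟩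
        · rcases hdich0 j with h1 | ⟨m, M, hm, h1⟩
          · have := h1 0 le_rfl 0 h0X
            unfold OutflowVertex at h
            linarith
          · exact ⟨m, hm, fun t ht x hx => Or.inl (h1 t ht x hx).1⟩
        · have hne : i ≠ j := by rintro rfl; exact lt_irrefl _ hlt
          rcases hdich i j hne with h1 | ⟨m, M, hm, h1⟩
          · have := h1 0 le_rfl 0 h0X
            linarith
          · exact ⟨m, hm, fun t ht x hx => Or.inr ⟨i, hne, hlt, (h1 t ht x hx).1⟩⟩
      choose m hm hm2 using this
      have : Nonempty (Fin n) := ⟨⟨0, hn⟩⟩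
      obtain ⟨j0, hj0⟩ := Finite.exists_min m
      refine ⟨m j0, hm j0, fun j t ht x hx => ?_⟩
      rcases hm2 j t ht x hx with h | ⟨i, h1, h2, h3⟩
      · exact Or.inl ((hj0 j).trans h)
      · exact Or.inr ⟨i, h1, h2, (hj0 j).trans h3⟩
    obtain ⟨m, hm, hmd⟩ := hmex
    obtain ⟨r, hr, hr2, hrM⟩ : ∃ r : ℝ, 0 < r ∧ r ≤ 1/2 ∧ n * M * r ≤ m / 4 := by
      have hnM : 0 ≤ (n : ℝ) * M := mul_nonneg (Nat.cast_nonneg n) hM0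
      refine ⟨min (1/2) (m / (4 * (n * M + 1))), lt_min (by norm_num) (by positivity),
        min_le_left _ _, ?_⟩
      calc n * M * min (1/2) (m / (4 * (n * M + 1)))
          ≤ (n * M + 1) * (m / (4 * (n * M + 1))) := by
            apply mul_le_mul (by linarith) (min_le_right _ _) _ (by linarith)
            exact le_min (by norm_num) (by positivity)
        _ = m / 4 := by field_simp
    have hDex : ∃ D, ∀ i, d i ≤ D := ⟨∑ i, d i, fun i =>
      Finset.single_le_sum (f := d) (fun _ _ => Nat.zero_le _) (Finset.mem_univ i)⟩
    obtain ⟨D, hD⟩ := hDex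
    have hw : ∀ i, 1 / 2 ≤ 1 - r ^ (d i + 1) := by
      intro i
      have h1 : r ^ (d i + 1) = r ^ (d i) * r := pow_succ _ _
      have h2 : r ^ (d i) ≤ 1 := pow_le_one₀ hr.le (by linarith)
      nlinarith [pow_pos hr (d i)]
    have hw1 : ∀ i, 1 - r ^ (d i + 1) ≤ 1 := fun i => by linarith [pow_pos hr (d i + 1)]
    have hc : 0 < m * r ^ D / 4 := by positivity
    refine ⟨m * r ^ D / 4, hc, 2, by norm_num, fun ξ hξ t ht => ?_⟩
    obtain ⟨hφ0, hφ1⟩ := hφ ξ hξ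
    have key := aux_exp (fun s => ∑ i, (1 - r ^ (d i + 1)) * φ s ξ i) _ (m * r ^ D / 4)
      (fun s hs => aux_deriv _ _ _ (fun i => 1 - r ^ (d i + 1)) s (hφ1 s hs).2) (by
        intro s hs
        have hx := (hφ1 s hs).1
        have hcol := aux_col (F s (φ s ξ)) (hFcomp s hs _ hx) d D hD r m M hr hr2 hm hM0 hrM
          (fun i j hij => hM i j hij s hs _ hx) (fun j => hmd j s hs _ hx)
        rw [Finset.mul_sum]
        refine Finset.sum_le_sum fun j _ => ?_
        have h1 := (hg s hs _ hx j).1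
        have h2 : 0 ≤ φ s ξ j := hXsub hx j
        have h3 := hgnn s hs _ hx j
        calc _ ≤ -(m * r ^ D / 4) * g s (φ s ξ) j := mul_le_mul_of_nonneg_right (hcol j) h3
          _ ≤ -(m * r ^ D / 4) * ((1 - r ^ (d j + 1)) * φ s ξ j) :=
            mul_le_mul_of_nonpos_left
              ((mul_le_of_le_one_left h2 (hw1 j)).trans h1) (by linarith)) t ht
    simp only [hφ0] at key
    have hA : onenorm (φ t ξ) ≤ 2 * ∑ i, (1 - r ^ (d i + 1)) * φ t ξ i := by
      unfold onenorm
      rw [Finset.mul_sum]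
      refine Finset.sum_le_sum fun i _ => ?_
      have h2 : 0 ≤ φ t ξ i := hXsub (hφ1 t ht).1 i
      rw [abs_of_nonneg h2]
      nlinarith [hw i]
    have hB : ∑ i, (1 - r ^ (d i + 1)) * ξ i ≤ onenorm ξ := by
      unfold onenorm
      refine Finset.sum_le_sum fun i _ => ?_
      have h2 : 0 ≤ ξ i := hXsub hξ i
      rw [abs_of_nonneg h2]
      exact mul_le_of_le_one_left h2 (hw1 i)
    have hC := mul_le_mul_of_nonneg_left hB (Real.exp_pos (-(m * r ^ D / 4) * t)).le
    linarith
  refine ⟨⟨?_, ?_⟩, hexp⟩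
  · rintro ⟨β, hβ, hle⟩
    by_contra hno
    have hex : ∃ i, ¬ ∃ j, OutflowVertex (F 0 0) j ∧
        Relation.ReflTransGen (fun u v : Fin n => 0 < F 0 0 v u) i j := by
      by_contra hcon
      push Not at hcon
      apply hno
      refine ⟨?_, fun i _ => hcon i⟩
      obtain ⟨j, hj, _⟩ := hcon ⟨0, hn⟩
      exact ⟨j, hj⟩
    obtain ⟨i0, hi0⟩ := hex
    set S : Fin n → Prop := fun i => ¬ ∃ j, OutflowVertex (F 0 0) j ∧
        Relation.ReflTransGen (fun u v : Fin n => 0 < F 0 0 v u) i j with hS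
    have hSout : ∀ j, S j → ∀ t ≥ (0 : ℝ), ∀ x ∈ X, ∑ k, F t x k j = 0 := by
      intro j hj t ht x hx
      rcases hdich0 j with h1 | ⟨m, M, hm, h1⟩
      · linarith [h1 t ht x hx]
      · exact absurd ⟨j, by unfold OutflowVertex; linarith [(h1 0 le_rfl 0 h0X).1],
          Relation.ReflTransGen.refl⟩ hj
    have hSedge : ∀ i j, S j → ¬ S i → ∀ t ≥ (0 : ℝ), ∀ x ∈ X, F t x i j = 0 := by
      intro i j hj hi t ht x hx
      have hij : i ≠ j := by rintro rfl; exact hi hj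
      rcases hdich i j hij with h1 | ⟨m, M, hm, h1⟩
      · exact h1 t ht x hx
      · exfalso
        apply hi
        rintro ⟨k, hk, hik⟩
        exact hj ⟨k, hk, Relation.ReflTransGen.head
          (hm.trans_le (h1 0 le_rfl 0 h0X).1) hik⟩
    let ξ : Fin n → ℝ := fun _ => ε / 2
    have hξ : ξ ∈ X := hXeps fun i => ⟨by simp only [ξ]; linarith, by simp only [ξ]; linarith⟩
    obtain ⟨hφ0, hφ1⟩ := hφ ξ hξ
    let w : Fin n → ℝ := fun i => if S i then 1 else 0
    have hd : ∀ s ≥ (0 : ℝ), HasDerivAt (fun s => ∑ i, w i * φ s ξ i) _ s :=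
      fun s hs => aux_deriv _ _ _ w s (hφ1 s hs).2
    have hmono : MonotoneOn (fun s => ∑ i, w i * φ s ξ i) (Set.Ici 0) := by
      refine monotoneOn_of_deriv_nonneg (convex_Ici 0)
        (fun s hs => (hd s hs).continuousAt.continuousWithinAt) ?_ ?_
      · intro s hs
        rw [interior_Ici] at hs
        exact (hd s (le_of_lt hs)).differentiableAt.differentiableWithinAt
      · intro s hs
        rw [interior_Ici] at hs
        have hs0 : s ≥ 0 := le_of_lt hs
        have hx := (hφ1 s hs0).1
        rw [(hd s hs0).deriv]
        refine Finset.sum_nonneg fun j _ => mul_nonneg ?_ (hgnn s hs0 _ hx j)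
        by_cases hj : S j
        · have : ∑ i, w i * F s (φ s ξ) i j = ∑ i, F s (φ s ξ) i j := by
            refine Finset.sum_congr rfl fun i _ => ?_
            by_cases hi : S i
            · simp [w, hi]
            · rw [hSedge i j hj hi s hs0 _ hx, mul_zero]
          rw [this, hSout j hj s hs0 _ hx]
        · refine Finset.sum_nonneg fun i _ => ?_
          by_cases hi : S i
          · have hij : i ≠ j := by rintro rfl; exact hj hi
            simpa [w, hi] using (hFcomp s hs0 _ hx).1 i j hij
          · simp [w, hi]
    have hlow : ∀ t ≥ (0 : ℝ), ε / 2 ≤ β (onenorm ξ) t := by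
      intro t ht
      have h1 := hmono (Set.mem_Ici.2 le_rfl) (Set.mem_Ici.2 ht) ht
      simp only [hφ0] at h1
      have h2 : ε / 2 ≤ ∑ i, w i * ξ i := by
        have h3 : w i0 * ξ i0 = ε / 2 := by
          have : S i0 := hi0
          simp [w, ξ, this]
        rw [← h3]
        refine Finset.single_le_sum (f := fun i => w i * ξ i) (fun i _ => ?_) (Finset.mem_univ i0)
        simp only [w, ξ]
        split_ifs
        · linarith
        · simp
      have h4 : ∑ i, w i * φ t ξ i ≤ onenorm (φ t ξ) := by
        unfold onenorm
        refine Finset.sum_le_sum fun i _ => ?_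
        by_cases hi : S i
        · simpa [w, hi] using le_abs_self _
        · simp [w, hi]
      linarith [hle ξ hξ t ht]
    have hnn : onenorm ξ ∈ Set.Ici (0 : ℝ) :=
      Set.mem_Ici.2 (by unfold onenorm; exact Finset.sum_nonneg fun _ _ => abs_nonneg _)
    have hlim := hβ.2.2.2.2 _ hnn
    have : ε / 2 ≤ 0 := ge_of_tendsto hlim
      (Filter.eventually_atTop.2 ⟨0, fun t ht => hlow t ht⟩)
    linarith
  · intro hoc
    obtain ⟨lam, hlam, γ, hγ, h⟩ := hexp hoc
    refine ⟨fun r t => γ * Real.exp (-lam * t) * r, ⟨?_, ?_, ?_, ?_, ?_⟩, h⟩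
    · exact Continuous.continuousOn (by fun_prop)
    · intro r hr t _
      have : 0 ≤ r := hr
      positivity
    · intro t _
      simp
    · intro t _ a _ b _ hab
      exact mul_lt_mul_of_pos_left hab (by positivity)
    · intro r _
      have h1 : Filter.Tendsto (fun t : ℝ => Real.exp (-lam * t)) Filter.atTop (nhds 0) := by
        refine Real.tendsto_exp_atBot.comp ?_
        exact Filter.tendsto_id.const_mul_atTop_of_neg (by linarith)
      simpa using (h1.const_mul γ).mul_const r
end
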